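/- Let R be a Noetherian commutative ring and A an 𝔸ⁿ-fibration over R such that Ω_R(A) is a stably free A-module. Suppose W = (W₁,…,W_m) is an m-tuple residual variable of A over R. Then there exists ℓ ∈ ℕ such that the polynomial ring in ℓ variables over A is isomorphic, as an R[W]-algebra, to the polynomial ring in n − m + ℓ variables over R[W]; in particular, A is a stably polynomial algebra over R[W]. -/

import Mathlib

open TensorProduct

noncomputable section

/-- The residue field `κ(P) = R_P / P R_P` of a commutative ring `R` at a prime ideal `P`. -/
abbrev ResidueFieldAt (R : Type*) [CommRing R] (P : Ideal R) [P.IsPrime] : Type _ :=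
  IsLocalRing.ResidueField (Localization.AtPrime P)

/-- `A ⊗_R κ(P)` is a polynomial ring in `n` variables over `B ⊗_R κ(P)`
for every prime ideal `P` of `R`. -/
def FibersPolynomialOver (R B A : Type*) [CommRing R] [CommRing B] [CommRing A]
    [Algebra R B] [Algebra R A] [Algebra B A] [IsScalarTower R B A] (n : ℕ) : Prop :=
  ∀ (P : Ideal R) (_ : P.IsPrime),
    letI : Algebra (ResidueFieldAt R P ⊗[R] B) (ResidueFieldAt R P ⊗[R] A) :=
      (Algebra.TensorProduct.map (AlgHom.id R (ResidueFieldAt R P))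
        (IsScalarTower.toAlgHom R B A)).toRingHom.toAlgebra
    Nonempty ((ResidueFieldAt R P ⊗[R] A) ≃ₐ[ResidueFieldAt R P ⊗[R] B]
      MvPolynomial (Fin n) (ResidueFieldAt R P ⊗[R] B))

/-- `A` is an `𝔸ⁿ`-fibration over `R`: a finitely generated flat `R`-algebra all of whose
fibres are polynomial rings in `n` variables. -/
def IsAffineFibration (R A : Type*) [CommRing R] [CommRing A] [Algebra R A] (n : ℕ) : Prop :=
  Algebra.FiniteType R A ∧ Module.Flat R A ∧
  ∀ (P : Ideal R) (_ : P.IsPrime),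
    Nonempty ((ResidueFieldAt R P ⊗[R] A) ≃ₐ[ResidueFieldAt R P]
      MvPolynomial (Fin n) (ResidueFieldAt R P))

/-- `W` is an `m`-tuple residual variable of the `𝔸ⁿ`-fibration `A` over `R`. -/
def IsResidualVariable (R A : Type*) [CommRing R] [CommRing A] [Algebra R A]
    (n m : ℕ) (W : Fin m → A) : Prop :=
  AlgebraicIndependent R W ∧
  FibersPolynomialOver R (Algebra.adjoin R (Set.range W)) A (n - m)

/-- A module `M` over `A` is stably free if `M ⊕ Aˢ ≅ Aᵗ` for some `s, t`. -/
def IsStablyFree (A M : Type*) [CommRing A] [AddCommGroup M] [Module A M] : Prop :=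
  ∃ s t : ℕ, Nonempty ((M × (Fin s → A)) ≃ₗ[A] (Fin t → A))

end

/-!
Put `B = R[W]`. Modulo a radical ideal `I` of `R`, coordinates on the fibres of `A` over `B` at the
minimal primes of `I` glue to a tuple `x` of elements of `A` which becomes a system of coordinates
after inverting some `t` regular modulo `I`. By Noetherian induction on `I`, we may assume that,
after adjoining finitely many variables, there is also a system of coordinates `y` modulo
`I + (t)`. A surjection `Ω_B(A) → A^r` turns coordinates into square Jacobian matrices; those of `x`
and `y` are invertible up to powers of `t` and modulo `t` respectively, and Whitehead's lemma shows
that after a further stabilization they can be matched. Correcting `y` by a matching linear change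
of the new variables yields elements which are coordinates both after inverting `t` and modulo `t`,
hence coordinates modulo `I`. Passing from `I + (t)` to `I` for nilpotent `t` is automatic by
flatness, so the induction reaches `I = 0`.

The surjection exists after adjoining variables because `Ω_R(A)` is stably free: on each fibre the
`W j` are part of a system of coordinates, so by Nakayama's lemma the differentials `dW j` form part
of a basis of a free direct summand of the projective module `Ω_R(A)`, and the complement is a
quotient of `Ω_B(A)`.
-/

namespace AffineFibration

open MvPolynomial

section Mod

variable {R C D : Type*} [CommRing R] [CommRing C] [CommRing D] [Algebra R C] [Algebra R D]

/-- `θ : C → D` is injective modulo the ideal `I` of the base ring, that is, the induced map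
`C ⧸ IC → D ⧸ ID` is injective. -/
def InjectiveMod (I : Ideal R) (θ : C →ₐ[R] D) : Prop :=
  ∀ ⦃c⦄, θ c ∈ I.map (algebraMap R D) → c ∈ I.map (algebraMap R C)

/-- The elements of `D` which become, after multiplication by an element of `S`, congruent modulo
the ideal `I` of the base ring to an element of the range of `θ`. -/
def saturatedRange (S : Submonoid R) (I : Ideal R) (θ : C →ₐ[R] D) : Subalgebra R D where
  carrier := {d | ∃ s ∈ S, ∃ c, algebraMap R D s * d - θ c ∈ I.map (algebraMap R D)}
  mul_mem' := by
    rintro a b ⟨s, hs, c, h⟩ ⟨s', hs', c', h'⟩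
    refine ⟨s * s', S.mul_mem hs hs', c * c', ?_⟩
    convert add_mem (Ideal.mul_mem_right (algebraMap R D s' * b) _ h)
      (Ideal.mul_mem_left _ (θ c) h') using 1
    simp only [map_mul]
    ring
  add_mem' := by
    rintro a b ⟨s, hs, c, h⟩ ⟨s', hs', c', h'⟩
    refine ⟨s * s', S.mul_mem hs hs', algebraMap R C s' * c + algebraMap R C s * c', ?_⟩
    convert add_mem (Ideal.mul_mem_left _ (algebraMap R D s') h)
      (Ideal.mul_mem_left _ (algebraMap R D s) h') using 1
    simp only [map_mul, map_add, AlgHom.commutes]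
    ring
  algebraMap_mem' r := ⟨1, S.one_mem, algebraMap R C r, by simp⟩

/-- `θ : C → D` is surjective modulo the ideal `I` of the base ring after localization at `S`,
that is, the induced map `S⁻¹C ⧸ IS⁻¹C → S⁻¹D ⧸ IS⁻¹D` is surjective. -/
def SurjectiveMod (S : Submonoid R) (I : Ideal R) (θ : C →ₐ[R] D) : Prop :=
  ∀ d, d ∈ saturatedRange S I θ

lemma apply_mem_saturatedRange {S : Submonoid R} {I : Ideal R} (θ : C →ₐ[R] D) (c : C) :
    θ c ∈ saturatedRange S I θ :=
  ⟨1, S.one_mem, c, by simp⟩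

lemma mem_saturatedRange_of_algebraMap_mul_mem {S : Submonoid R} {I : Ideal R} {θ : C →ₐ[R] D}
    {s : R} (hs : s ∈ S) {d : D} (h : algebraMap R D s * d ∈ saturatedRange S I θ) :
    d ∈ saturatedRange S I θ := by
  obtain ⟨s', hs', c, hc⟩ := h
  exact ⟨s' * s, S.mul_mem hs' hs, c, by rwa [map_mul, mul_assoc]⟩

lemma injectiveMod_bot_iff {θ : C →ₐ[R] D} : InjectiveMod ⊥ θ ↔ Function.Injective θ := by
  simp [InjectiveMod, injective_iff_map_eq_zero]

lemma surjectiveMod_bot_iff {I : Ideal R} {θ : C →ₐ[R] D} :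
    SurjectiveMod ⊥ I θ ↔ ∀ d, ∃ c, d - θ c ∈ I.map (algebraMap R D) := by
  refine forall_congr' fun d => ⟨?_, fun ⟨c, hc⟩ => ⟨1, one_mem _, c, by simpa using hc⟩⟩
  rintro ⟨s, hs, c, hc⟩
  rw [Submonoid.mem_bot] at hs
  exact ⟨c, by simpa [hs] using hc⟩

lemma surjectiveMod_powers_bot_iff {t : R} {θ : C →ₐ[R] D} :
    SurjectiveMod (Submonoid.powers t) ⊥ θ ↔ ∀ d, ∃ k c, algebraMap R D t ^ k * d = θ c := by
  refine forall_congr' fun d => ⟨?_, fun ⟨k, c, hc⟩ => ⟨t ^ k, ⟨k, rfl⟩, c, by simp [hc]⟩⟩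
  rintro ⟨_, ⟨k, rfl⟩, c, hc⟩
  exact ⟨k, c, by simpa [sub_eq_zero] using hc⟩

lemma exists_eq_sum_of_mem_map {I : Ideal R} {x : D} (hx : x ∈ I.map (algebraMap R D)) :
    ∃ (n : ℕ) (i : Fin n → R) (d : Fin n → D), (∀ k, i k ∈ I) ∧
      x = ∑ k, algebraMap R D (i k) * d k := by
  rw [Ideal.map, Ideal.span, Submodule.mem_span_set'] at hx
  obtain ⟨n, d, g, rfl⟩ := hx
  choose i hiI hi using fun k => (g k).2
  exact ⟨n, i, d, hiI, Finset.sum_congr rfl fun k _ => by rw [hi, smul_eq_mul, mul_comm]⟩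

lemma map_mem_map_algebraMap (I : Ideal R) (θ : C →ₐ[R] D) {c : C}
    (hc : c ∈ I.map (algebraMap R C)) : θ c ∈ I.map (algebraMap R D) := by
  simpa [Ideal.map_map, AlgHom.comp_algebraMap] using Ideal.mem_map_of_mem (θ : C →+* D) hc

lemma InjectiveMod.of_comp {E : Type*} [CommRing E] [Algebra R E] {I : Ideal R}
    {θ : C →ₐ[R] D} (ψ : D →ₐ[R] E) (h : InjectiveMod I (ψ.comp θ)) : InjectiveMod I θ :=
  fun _ hc => h (map_mem_map_algebraMap I ψ hc)

lemma exists_factorization_of_sum_mul_mem_map [Module.Flat R D] {I : Ideal R} {n : ℕ}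
    (r : Fin n → R) (x : Fin n → D)
    (h : ∑ a, algebraMap R D (r a) * x a ∈ I.map (algebraMap R D)) :
    ∃ (k : ℕ) (y : Fin n → Fin k → R) (e : Fin k → D),
      (∀ a, x a = ∑ b, algebraMap R D (y a b) * e b) ∧ ∀ b, ∑ a, r a * y a b ∈ I := by
  obtain ⟨m, i, d, hi, hs⟩ := exists_eq_sum_of_mem_map h
  have hrel : ∑ a : Fin n ⊕ Fin m, Sum.elim r (fun k => -i k) a • Sum.elim x d a = 0 := by
    simp [Fintype.sum_sum_type, Algebra.smul_def, hs]
  obtain ⟨k, y, e, hy, hsum⟩ :=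
    Module.Flat.isTrivialRelation_of_sum_smul_eq_zero (R := R) (M := D) hrel
  refine ⟨k, fun b c => y (Sum.inl b) c, e, fun b => ?_, fun b => ?_⟩
  · simpa [Algebra.smul_def] using hy (Sum.inl b)
  · have hb : ∑ a, r a * y (Sum.inl a) b = ∑ k, i k * y (Sum.inr k) b := by
      simpa [Fintype.sum_sum_type, add_neg_eq_zero] using hsum b
    exact hb ▸ sum_mem fun c _ => Ideal.mul_mem_right _ _ (hi c)

lemma mem_map_of_algebraMap_mul_mem_map [Module.Flat R D] {I : Ideal R} {s : R}
    (hs : ∀ x, s * x ∈ I → x ∈ I) {d : D}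
    (h : algebraMap R D s * d ∈ I.map (algebraMap R D)) : d ∈ I.map (algebraMap R D) := by
  obtain ⟨k, y, e, hd, hy⟩ := exists_factorization_of_sum_mul_mem_map (I := I)
    (fun _ : Fin 1 => s) (fun _ => d) (by simpa using h)
  rw [hd 0]
  refine sum_mem fun b _ => Ideal.mul_mem_right _ _ (Ideal.mem_map_of_mem _ (hs _ ?_))
  simpa using hy b

lemma mul_mem_map_mul {I J : Ideal R} {i : R} (hi : i ∈ I) {d : D}
    (hd : d ∈ J.map (algebraMap R D)) : algebraMap R D i * d ∈ (I * J).map (algebraMap R D) := by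
  rw [Ideal.map_mul]
  exact Ideal.mul_mem_mul (Ideal.mem_map_of_mem _ hi) hd

lemma SurjectiveMod.mono {S : Submonoid R} {I J : Ideal R} (hIJ : I ≤ J) {θ : C →ₐ[R] D}
    (hθ : SurjectiveMod S I θ) : SurjectiveMod S J θ := fun d =>
  let ⟨s, hs, c, hc⟩ := hθ d
  ⟨s, hs, c, Ideal.map_mono hIJ hc⟩

lemma SurjectiveMod.mul {I J : Ideal R} {θ : C →ₐ[R] D} (hI : SurjectiveMod ⊥ I θ)
    (hJ : SurjectiveMod ⊥ J θ) : SurjectiveMod ⊥ (I * J) θ := by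
  rw [surjectiveMod_bot_iff] at hI hJ ⊢
  intro d
  obtain ⟨c, hc⟩ := hI d
  obtain ⟨n, i, x, hi, hx⟩ := exists_eq_sum_of_mem_map hc
  choose g hg using fun a => hJ (x a)
  have hd : d - θ (c + ∑ a, algebraMap R C (i a) * g a) =
      ∑ a, algebraMap R D (i a) * (x a - θ (g a)) := by
    simp only [map_add, map_sum, map_mul, AlgHom.commutes, mul_sub, Finset.sum_sub_distrib, ← hx]
    ring
  exact ⟨_, hd ▸ sum_mem fun a _ => mul_mem_map_mul (hi a) (hg a)⟩

lemma SurjectiveMod.pow {I : Ideal R} {θ : C →ₐ[R] D} (hI : SurjectiveMod ⊥ I θ) (k : ℕ) :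
    SurjectiveMod ⊥ (I ^ k) θ := by
  induction k with
  | zero => exact surjectiveMod_bot_iff.2 fun d => ⟨0, by simp [Ideal.map_top]⟩
  | succ k ih => exact pow_succ I k ▸ ih.mul hI

lemma InjectiveMod.of_mul_le [Module.Flat R D] {I J : Ideal R} (hJJ : J * J ≤ I) (hIJ : I ≤ J)
    {θ : C →ₐ[R] D} (hinj : InjectiveMod J θ) (hsurj : SurjectiveMod ⊥ J θ) :
    InjectiveMod I θ := by
  rw [surjectiveMod_bot_iff] at hsurj
  intro c hc
  obtain ⟨n, j, x, hj, rfl⟩ := exists_eq_sum_of_mem_map (hinj (Ideal.map_mono hIJ hc))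
  simp only [map_sum, map_mul, AlgHom.commutes] at hc
  obtain ⟨k, y, e, hx, hy⟩ := exists_factorization_of_sum_mul_mem_map j (fun a => θ (x a)) hc
  choose g hg using fun b => hsurj (e b)
  have hxg : ∀ a, x a - ∑ b, algebraMap R C (y a b) * g b ∈ J.map (algebraMap R C) := by
    intro a
    apply hinj
    have hθ : θ (x a - ∑ b, algebraMap R C (y a b) * g b) =
        ∑ b, algebraMap R D (y a b) * (e b - θ (g b)) := by
      simp only [map_sub, map_sum, map_mul, AlgHom.commutes, mul_sub,
        Finset.sum_sub_distrib, ← hx]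
    exact hθ ▸ sum_mem fun b _ => Ideal.mul_mem_left _ _ (hg b)
  have hsplit : ∑ a, algebraMap R C (j a) * x a =
      ∑ a, algebraMap R C (j a) * (x a - ∑ b, algebraMap R C (y a b) * g b) +
      ∑ b, algebraMap R C (∑ a, j a * y a b) * g b := by
    simp only [mul_sub, Finset.sum_sub_distrib, map_sum, Finset.sum_mul, Finset.mul_sum, map_mul]
    rw [Finset.sum_comm (γ := Fin k)]
    simp [mul_assoc]
  rw [hsplit]
  exact add_mem (sum_mem fun a _ => Ideal.map_mono hJJ (mul_mem_map_mul (hj a) (hxg a)))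
    (sum_mem fun b _ => Ideal.mul_mem_right _ _ (Ideal.mem_map_of_mem _ (hy b)))

end Mod

section Adjoin

variable {R B A ι σ : Type*} [CommRing R] [CommRing B] [CommRing A] [Algebra R B] [Algebra R A]
  [Algebra B A] [IsScalarTower R B A]

lemma mem_map_algebraMap_iff_coeff (I : Ideal R) (p : MvPolynomial σ A) :
    p ∈ I.map (algebraMap R (MvPolynomial σ A)) ↔ ∀ m, p.coeff m ∈ I.map (algebraMap R A) := by
  rw [IsScalarTower.algebraMap_eq R A (MvPolynomial σ A), ← Ideal.map_map]
  exact mem_map_C_iff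

lemma algebraMap_mvPolynomial_mem_nonZeroDivisors {t : R}
    (ht : algebraMap R A t ∈ nonZeroDivisors A) :
    algebraMap R (MvPolynomial σ A) t ∈ nonZeroDivisors (MvPolynomial σ A) := by
  rw [mem_nonZeroDivisors_iff_right]
  intro d hd
  ext m
  refine (mul_left_mem_nonZeroDivisors_eq_zero_iff ht).1 ?_
  rw [← coeff_C_mul, mul_comm]
  exact congrArg (coeff m) hd

variable (R B) in
/-- The evaluation `B[ι] → A` of polynomials at the tuple `x`, as a homomorphism of algebras over
the base ring `R` of `B`. The tuple consists of coordinates on `A` over `B` if this map is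
bijective. -/
noncomputable abbrev aevalOver (x : ι → A) : MvPolynomial ι B →ₐ[R] A :=
  (aeval x : MvPolynomial ι B →ₐ[B] A).restrictScalars R

/-- The tuple of elements of `A[σ]` consisting of the tuple `x` of elements of `A` and of the
variables indexed by `σ`. -/
noncomputable abbrev adjoinVars (σ : Type*) (x : ι → A) : ι ⊕ σ → MvPolynomial σ A :=
  Sum.elim (fun i => C (x i)) X

lemma aeval_adjoinVars_rename_inl (x : ι → A) (p : MvPolynomial ι B) :
    aeval (adjoinVars σ x) (rename Sum.inl p) = C (aeval x p) := by
  simpa [aeval_rename, Function.comp_def] using aeval_algebraMap_apply (MvPolynomial σ A) x p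

lemma aeval_adjoinVars (x : ι → A) (p : MvPolynomial (ι ⊕ σ) B) :
    aeval (adjoinVars σ x) p =
      map ((aeval x : MvPolynomial ι B →ₐ[B] A) : MvPolynomial ι B →+* A)
        (sumAlgEquiv B σ ι (rename Sum.swap p)) := by
  induction p using MvPolynomial.induction_on with
  | C b => simp [algebraMap_eq, IsScalarTower.algebraMap_apply B A (MvPolynomial σ A)]
  | add p q hp hq => simp only [map_add, hp, hq]
  | mul_X p i hp => rcases i with i | i <;> simp only [map_mul, hp] <;> simp

lemma InjectiveMod.adjoinVars {I : Ideal R} {x : ι → A} (h : InjectiveMod I (aevalOver R B x)) :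
    InjectiveMod I (aevalOver R B (adjoinVars σ x)) := by
  intro p hp
  set q := sumAlgEquiv B σ ι (rename Sum.swap p) with hq
  have hqI : q ∈ I.map (algebraMap R _) := by
    rw [AlgHom.restrictScalars_apply, aeval_adjoinVars, mem_map_algebraMap_iff_coeff] at hp
    simp only [coeff_map] at hp
    exact (mem_map_algebraMap_iff_coeff _ _).2 fun m => h (hp m)
  have hpq : p = rename Sum.swap ((sumAlgEquiv B σ ι).symm q) := by
    rw [hq, AlgEquiv.symm_apply_apply, rename_rename]
    simp
  rw [hpq]
  exact map_mem_map_algebraMap I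
    (((rename Sum.swap).comp (sumAlgEquiv B σ ι).symm.toAlgHom).restrictScalars R) hqI

lemma SurjectiveMod.adjoinVars {S : Submonoid R} {I : Ideal R} {x : ι → A}
    (h : SurjectiveMod S I (aevalOver R B x)) :
    SurjectiveMod S I (aevalOver R B (adjoinVars σ x)) := by
  intro d
  induction d using MvPolynomial.induction_on with
  | C a =>
    obtain ⟨s, hs, c, hc⟩ := h a
    refine ⟨s, hs, rename Sum.inl c, ?_⟩
    rw [AlgHom.restrictScalars_apply, aeval_adjoinVars_rename_inl]
    simpa [IsScalarTower.algebraMap_apply R A (MvPolynomial σ A)] using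
      map_mem_map_algebraMap I (IsScalarTower.toAlgHom R A (MvPolynomial σ A)) hc
  | add p q hp hq => exact add_mem hp hq
  | mul_X p i hp => exact mul_mem hp ⟨1, S.one_mem, X (Sum.inr i), by simp⟩

lemma aeval_mem_saturatedRange {S : Submonoid R} {I : Ideal R} {x : σ → A} {z : ι → A}
    (hz : ∀ i, z i ∈ saturatedRange S I (aevalOver R B x)) (p : MvPolynomial ι B) :
    aeval z p ∈ saturatedRange S I (aevalOver R B x) := by
  induction p using MvPolynomial.induction_on with
  | C b => simpa using apply_mem_saturatedRange (aevalOver R B x) (C b)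
  | add p q hp hq => exact map_add (aeval z) p q ▸ add_mem hp hq
  | mul_X p i hp =>
    rw [map_mul, aeval_X]
    exact mul_mem hp (hz i)

lemma aeval_sub_aeval_mem (K : Ideal A) {x y : ι → A} (h : ∀ i, x i - y i ∈ K)
    (p : MvPolynomial ι B) : aeval x p - aeval y p ∈ K := by
  rw [← Ideal.Quotient.eq, ← Ideal.Quotient.algebraMap_eq, ← aeval_algebraMap_apply,
    ← aeval_algebraMap_apply]
  congr 2
  exact funext fun i => Ideal.Quotient.eq.2 (h i)

lemma InjectiveMod.congr {I : Ideal R} {x y : ι → A}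
    (hxy : ∀ i, x i - y i ∈ I.map (algebraMap R A)) (h : InjectiveMod I (aevalOver R B x)) :
    InjectiveMod I (aevalOver R B y) := fun p hp =>
  h (by simpa using add_mem (aeval_sub_aeval_mem _ hxy p) hp)

end Adjoin

section Isomorphism

lemma injective_of_surjective_of_isNoetherianRing {S : Type*} [CommRing S]
    [IsNoetherianRing S] (f : S →+* S) (hf : Function.Surjective f) : Function.Injective f := by
  let K : ℕ →o Ideal S := ⟨fun n => RingHom.ker (f ^ n), monotone_nat_of_le_succ fun n x hx => by
    rw [RingHom.mem_ker, RingHom.coe_pow] at hx ⊢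
    rw [Function.iterate_succ_apply', hx, map_zero]⟩
  obtain ⟨n, hn⟩ := monotone_stabilizes_iff_noetherian.mpr ‹IsNoetherian S S› K
  have hK : ∀ m y, y ∈ K m ↔ f^[m] y = 0 := fun m y => by
    rw [← RingHom.coe_pow]; rfl
  rw [injective_iff_map_eq_zero]
  intro x hx
  obtain ⟨y, rfl⟩ := hf.iterate n x
  rwa [← hK, hn (n + 1) n.le_succ, hK, Function.iterate_succ_apply']

variable {R C D : Type*} [CommRing R] [CommRing C] [CommRing D] [Algebra R C] [Algebra R D]

/-- The homomorphism `C[1/t] → D[1/t]` induced by `θ : C → D`. -/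
noncomputable def awayMap (t : R) (θ : C →ₐ[R] D) :
    Localization.Away (algebraMap R C t) →+* Localization.Away (algebraMap R D t) :=
  IsLocalization.map _ (M := .powers (algebraMap R C t)) (T := .powers (algebraMap R D t))
    (θ : C →+* D) (by rintro _ ⟨k, rfl⟩; exact ⟨k, by simp⟩)

lemma awayMap_surjective {t : R} {θ : C →ₐ[R] D}
    (hθ : SurjectiveMod (Submonoid.powers t) ⊥ θ) : Function.Surjective (awayMap t θ) := by
  intro z
  obtain ⟨d, ⟨_, k, rfl⟩, rfl⟩ := IsLocalization.exists_mk'_eq (.powers (algebraMap R D t)) z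
  obtain ⟨l, c, hc⟩ := surjectiveMod_powers_bot_iff.1 hθ d
  refine ⟨IsLocalization.mk' _ c
    (⟨algebraMap R C t ^ (l + k), l + k, rfl⟩ : Submonoid.powers (algebraMap R C t)), ?_⟩
  rw [awayMap, IsLocalization.map_mk', IsLocalization.mk'_eq_iff_eq]
  congr 1
  simp only [RingHom.coe_coe, map_pow, AlgHom.commutes, ← hc]
  ring

lemma awayMap_injective {t : R} {θ : C →ₐ[R] D} (hθ : Function.Injective θ) :
    Function.Injective (awayMap t θ) := by
  rw [injective_iff_map_eq_zero]
  intro z hz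
  obtain ⟨c, s, rfl⟩ := IsLocalization.exists_mk'_eq (.powers (algebraMap R C t)) z
  rw [awayMap, IsLocalization.map_mk', IsLocalization.mk'_eq_zero_iff] at hz
  obtain ⟨⟨_, k, rfl⟩, hk⟩ := hz
  rw [IsLocalization.mk'_eq_zero_iff]
  exact ⟨⟨_, k, rfl⟩, hθ (by simpa using hk)⟩

lemma injective_of_surjectiveMod_powers [IsNoetherianRing C] {t : R}
    (htD : algebraMap R D t ∈ nonZeroDivisors D) {φ θ : C →ₐ[R] D}
    (hφ : Function.Injective φ) (hφt : SurjectiveMod (Submonoid.powers t) ⊥ φ)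
    (hθt : SurjectiveMod (Submonoid.powers t) ⊥ θ) : Function.Injective θ := by
  have htC : ∀ k (c : C), algebraMap R C t ^ k * c = 0 → c = 0 := by
    intro k
    induction k with
    | zero => simp
    | succ k ih =>
      refine fun c hc => ih c (hφ ?_)
      rw [map_zero]
      exact (mul_left_mem_nonZeroDivisors_eq_zero_iff htD).1
        (by simpa [pow_succ', mul_assoc] using congrArg φ hc)
  let e := RingEquiv.ofBijective (awayMap t φ) ⟨awayMap_injective hφ, awayMap_surjective hφt⟩
  have : IsNoetherianRing (Localization.Away (algebraMap R C t)) :=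
    IsLocalization.isNoetherianRing (.powers (algebraMap R C t)) _ inferInstance
  have hinj := injective_of_surjective_of_isNoetherianRing
    ((e.symm : _ →+* Localization.Away (algebraMap R C t)).comp (awayMap t θ))
    (e.symm.surjective.comp (awayMap_surjective hθt))
  rw [injective_iff_map_eq_zero]
  intro c hc
  have hc0 : algebraMap C (Localization.Away (algebraMap R C t)) c = 0 :=
    hinj (by simp [awayMap, IsLocalization.map_eq, hc])
  rw [IsLocalization.map_eq_zero_iff (.powers (algebraMap R C t))] at hc0
  obtain ⟨⟨_, k, rfl⟩, hk⟩ := hc0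
  exact htC k c hk

lemma mem_map_span_singleton {t : R} {d : D} :
    d ∈ (Ideal.span {t}).map (algebraMap R D) ↔ algebraMap R D t ∣ d := by
  rw [Ideal.map_span, Set.image_singleton, Ideal.mem_span_singleton]

lemma surjective_of_injectiveMod_span_singleton {t : R}
    (htD : algebraMap R D t ∈ nonZeroDivisors D) {θ : C →ₐ[R] D}
    (hθt : SurjectiveMod (Submonoid.powers t) ⊥ θ) (hθ : InjectiveMod (Ideal.span {t}) θ) :
    Function.Surjective θ := by
  have key : ∀ k (d : D), (∃ c, algebraMap R D t ^ k * d = θ c) → ∃ c, θ c = d := by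
    intro k
    induction k with
    | zero => rintro d ⟨c, hc⟩; exact ⟨c, by simpa using hc.symm⟩
    | succ k ih =>
      rintro d ⟨c, hc⟩
      obtain ⟨c', rfl⟩ := mem_map_span_singleton.1
        (hθ (mem_map_span_singleton.2 ⟨_, by rw [← hc, pow_succ', mul_assoc]⟩))
      refine ih d ⟨c', sub_eq_zero.1
        ((mul_left_mem_nonZeroDivisors_eq_zero_iff htD).1 ?_)⟩
      rw [map_mul, AlgHom.commutes] at hc
      rw [mul_sub, ← hc]
      ring
  intro d
  obtain ⟨k, c, hc⟩ := surjectiveMod_powers_bot_iff.1 hθt d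
  exact key k d ⟨c, hc⟩

end Isomorphism

section Taylor

variable {B D ι κ : Type*} [CommRing B] [CommRing D] [Algebra B D]

/-- The value at the point `y` of the Jacobian matrix of the polynomials `h`. -/
noncomputable def jacobian (h : ι → MvPolynomial κ B) (y : κ → D) : Matrix ι κ D :=
  Matrix.of fun i j => aeval y (pderiv j (h i))

lemma jacobian_C (h : ι → MvPolynomial κ B) (y : κ → D) {σ : Type*} :
    jacobian h (fun j => (C (y j) : MvPolynomial σ D)) = (jacobian h y).map C :=
  Matrix.ext fun i j => aeval_algebraMap_apply (MvPolynomial σ D) y (pderiv j (h i))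

variable [Fintype κ]

lemma sum_aeval_pderiv_mul_X_mul (y w : κ → D) (p : MvPolynomial κ B) (i : κ) :
    ∑ j, aeval y (pderiv j (p * X i)) * w j =
      (∑ j, aeval y (pderiv j p) * w j) * y i + aeval y p * w i := by
  classical
  simp only [pderiv_mul, pderiv_X, Pi.single_apply, map_add, map_mul, aeval_X, add_mul,
    Finset.sum_add_distrib, Finset.sum_mul]
  congr 1
  · exact Finset.sum_congr rfl fun j _ => by ring
  · simp

lemma derivation_aeval {M : Type*} [AddCommGroup M] [Module B M] [Module D M]
    [IsScalarTower B D M] (δ : Derivation B D M) (y : κ → D) (p : MvPolynomial κ B) :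
    δ (aeval y p) = ∑ j, aeval y (pderiv j p) • δ (y j) := by
  classical
  induction p using MvPolynomial.induction_on with
  | C b => simp
  | add p q hp hq => simp only [map_add, hp, hq, add_smul, Finset.sum_add_distrib]
  | mul_X p i hp =>
    simp [hp, pderiv_X, Pi.single_apply, apply_ite (aeval y), ite_smul, add_smul,
      Finset.sum_add_distrib, mul_smul, Finset.smul_sum]

lemma exists_aeval_add_mul_eq (y w : κ → D) (l : D) (p : MvPolynomial κ B) :
    ∃ g, aeval (fun j => y j + l * w j) p =
      aeval y p + l * ∑ j, aeval y (pderiv j p) * w j + l ^ 2 * g := by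
  induction p using MvPolynomial.induction_on with
  | C b => exact ⟨0, by simp⟩
  | add p q hp hq =>
    obtain ⟨g, hg⟩ := hp
    obtain ⟨g', hg'⟩ := hq
    refine ⟨g + g', ?_⟩
    simp only [map_add, hg, hg', add_mul, Finset.sum_add_distrib]
    ring
  | mul_X p i hp =>
    obtain ⟨g, hg⟩ := hp
    refine ⟨g * (y i + l * w i) + (∑ j, aeval y (pderiv j p) * w j) * w i, ?_⟩
    rw [sum_aeval_pderiv_mul_X_mul, map_mul, map_mul, hg, aeval_X, aeval_X]
    ring

end Taylor

section Gluing

open scoped Matrix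

variable {R B A ι : Type*} [CommRing R] [CommRing B] [CommRing A] [Algebra R B] [Algebra R A]
  [Algebra B A] [IsScalarTower R B A] [Fintype ι]

lemma exists_gluing_eq {τ : A} {x y : ι → A} {h : ι → MvPolynomial ι B} {c : ℕ}
    (hxy : ∀ i, τ ^ (2 * c + 2) ∣ x i - aeval y (h i)) {T S : Matrix ι ι A}
    (hTS : jacobian h y * T = τ ^ c • S) (i : ι) :
    ∃ g, C (x i) - aeval (fun j => C (y j) + C τ ^ (c + 1) * (T.map C *ᵥ X) j) (h i) =
      C τ ^ (2 * c + 1) * (C τ * g - (S.map C *ᵥ X) i) := by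
  obtain ⟨z, hz⟩ := hxy i
  obtain ⟨g, hg⟩ := exists_aeval_add_mul_eq (fun j => (C (y j) : MvPolynomial ι A))
    (T.map C *ᵥ X) (C τ ^ (c + 1)) (h i)
  have hlinear : ∑ j, aeval (fun j => (C (y j) : MvPolynomial ι A)) (pderiv j (h i)) *
      (T.map C *ᵥ X) j = C τ ^ c * (S.map C *ᵥ X) i := by
    change (jacobian h (fun j => C (y j)) *ᵥ (T.map C *ᵥ X)) i = _
    rw [jacobian_C, Matrix.mulVec_mulVec, ← Matrix.map_mul, hTS]
    simp [Matrix.mulVec, dotProduct, Finset.mul_sum, mul_assoc]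
  have hconst : (aeval (fun j => (C (y j) : MvPolynomial ι A)) (h i)) =
      C (x i) - C τ ^ (2 * c + 2) * C z := by
    rw [← map_pow, ← map_mul, ← hz, ← map_sub, sub_sub_cancel]
    exact aeval_algebraMap_apply (MvPolynomial ι A) y (h i)
  refine ⟨C z - g, ?_⟩
  rw [hg, hlinear, hconst]
  ring

lemma surjectiveMod_gluing [DecidableEq ι] {t : R} {x y : ι → A}
    (hx : SurjectiveMod (Submonoid.powers t) ⊥ (aevalOver R B x)) {h : ι → MvPolynomial ι B}
    {a k l : ℕ} {T T' : Matrix ι ι A} (hT : T' * T = algebraMap R A t ^ a • 1)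
    {u v : ι → MvPolynomial ι A}
    (hu : ∀ i, u i = C (y i) + C (algebraMap R A t) ^ k * (T.map C *ᵥ X) i)
    (hv : ∀ i, C (x i) - aeval u (h i) = C (algebraMap R A t) ^ l * v i) :
    SurjectiveMod (Submonoid.powers t) ⊥ (aevalOver R B (Sum.elim u v)) := by
  set θ := aevalOver R B (Sum.elim u v)
  set Q := saturatedRange (Submonoid.powers t) ⊥ θ
  have hτ : C (algebraMap R A t) = algebraMap R (MvPolynomial ι A) t := rfl
  have hu_mem : ∀ i, u i ∈ Q := fun i => by simpa [θ] using apply_mem_saturatedRange θ (X (.inl i))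
  have hv_mem : ∀ i, v i ∈ Q := fun i => by simpa [θ] using apply_mem_saturatedRange θ (X (.inr i))
  have hx_mem : ∀ i, C (x i) ∈ Q := fun i => by
    rw [sub_eq_iff_eq_add.mp (hv i), hτ]
    exact add_mem (mul_mem (pow_mem (Q.algebraMap_mem t) _) (hv_mem i))
      (aeval_mem_saturatedRange hu_mem _)
  have hA : ∀ d : A, C d ∈ Q := fun d => by
    obtain ⟨n, p, hp⟩ := surjectiveMod_powers_bot_iff.1 hx d
    refine mem_saturatedRange_of_algebraMap_mul_mem
      (pow_mem (Submonoid.mem_powers t) n) ?_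
    rw [map_pow, ← hτ, ← map_pow, ← map_mul, hp]
    exact aeval_algebraMap_apply (MvPolynomial ι A) x p ▸ aeval_mem_saturatedRange hx_mem p
  have hw_mem : ∀ i, (T.map C *ᵥ X) i ∈ Q := fun i => by
    refine mem_saturatedRange_of_algebraMap_mul_mem
      (pow_mem (Submonoid.mem_powers t) k) ?_
    rw [map_pow, ← hτ, ← sub_eq_iff_eq_add'.2 (hu i)]
    exact sub_mem (hu_mem i) (hA _)
  have hX_mem : ∀ i, X i ∈ Q := fun i => by
    refine mem_saturatedRange_of_algebraMap_mul_mem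
      (pow_mem (Submonoid.mem_powers t) a) ?_
    have hTw : algebraMap R (MvPolynomial ι A) (t ^ a) * X i =
        (T'.map C *ᵥ (T.map C *ᵥ X)) i := by
      rw [Matrix.mulVec_mulVec, ← Matrix.map_mul, hT, map_pow, ← hτ]
      simp [Matrix.mulVec, dotProduct, Matrix.one_apply, apply_ite C, ite_mul]
    rw [hTw]
    exact sum_mem fun j _ => mul_mem (hA _) (hw_mem j)
  intro d
  induction d using MvPolynomial.induction_on with
  | C b => exact hA b
  | add p q hp hq => exact add_mem hp hq
  | mul_X p i hp => exact mul_mem hp (hX_mem i)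

lemma injectiveMod_gluing [DecidableEq ι] {t : R} {y : ι → A}
    (hy : InjectiveMod (Ideal.span {t}) (aevalOver R B y)) {S S' E : Matrix ι ι A}
    (hS : S * S' = 1 + algebraMap R A t • E) {u v : ι → MvPolynomial ι A}
    (hu : ∀ i, C (algebraMap R A t) ∣ u i - C (y i))
    (hv : ∀ i, C (algebraMap R A t) ∣ v i + (S.map C *ᵥ X) i) :
    InjectiveMod (Ideal.span {t}) (aevalOver R B (Sum.elim u v)) := by
  have hmem : ∀ d : MvPolynomial ι A, d ∈ (Ideal.span {t}).map (algebraMap R _) ↔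
      C (algebraMap R A t) ∣ d := fun d => mem_map_span_singleton
  let ρ : MvPolynomial ι A →ₐ[A] MvPolynomial ι A := aeval (-(S'.map C *ᵥ X))
  have hρC : ∀ d, ρ (C d) = C d := ρ.commutes
  have hρS : ∀ i, ρ ((S.map C *ᵥ X) i) = -((S * S').map C *ᵥ X) i := by
    intro i
    rw [Matrix.map_mul, ← Matrix.mulVec_mulVec]
    simp [ρ, Matrix.mulVec, dotProduct]
  have hcomp : (ρ.restrictScalars R).comp (aevalOver R B (Sum.elim u v)) =
      aevalOver R B (Sum.elim (fun i => ρ (u i)) (fun i => ρ (v i))) := by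
    refine AlgHom.ext fun p => ?_
    change (ρ.restrictScalars B) (aeval _ p) = aeval _ p
    rw [← AlgHom.comp_apply, comp_aeval]
    congr 2
    funext i
    cases i <;> rfl
  have hE : ∀ i, ((1 + algebraMap R A t • E).map C *ᵥ X) i =
      X i + C (algebraMap R A t) * (E.map C *ᵥ X) i := fun i => by
    simp [-algebraMap_smul, Matrix.mulVec, dotProduct, Matrix.one_apply, apply_ite C, add_mul,
      Finset.sum_add_distrib, Finset.mul_sum, mul_assoc, ite_mul]
  refine InjectiveMod.of_comp (ρ.restrictScalars R) ?_
  rw [hcomp]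
  refine (hy.adjoinVars (σ := ι)).congr ?_
  rintro (i | i)
  · obtain ⟨g, hg⟩ := hu i
    rw [hmem]
    exact ⟨-ρ g, by simp [sub_eq_iff_eq_add.1 hg, hρC]⟩
  · obtain ⟨g, hg⟩ := hv i
    rw [hmem]
    refine ⟨-ρ g - (E.map C *ᵥ X) i, ?_⟩
    change X i - ρ (v i) = _
    rw [eq_sub_iff_add_eq.2 hg, map_sub, hρS, hS, map_mul, hρC, hE]
    ring

theorem nonempty_algEquiv_of_gluing [DecidableEq ι] [IsNoetherianRing B] {t : R} {τ : A}
    (hτ : algebraMap R A t = τ) (hτA : τ ∈ nonZeroDivisors A) {x y : ι → A}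
    (hx : Function.Injective (aevalOver R B x))
    (hxt : SurjectiveMod (Submonoid.powers t) ⊥ (aevalOver R B x))
    (hy : InjectiveMod (Ideal.span {t}) (aevalOver R B y)) {h : ι → MvPolynomial ι B} {a c : ℕ}
    (hxy : ∀ i, τ ^ (2 * c + 2) ∣ x i - aeval y (h i)) {T T' S S' E : Matrix ι ι A}
    (hTS : jacobian h y * T = τ ^ c • S) (hT : T' * T = τ ^ a • 1) (hS : S * S' = 1 + τ • E) :
    Nonempty (MvPolynomial (ι ⊕ ι) B ≃ₐ[B] MvPolynomial ι A) := by
  subst hτ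
  choose g hg using exists_gluing_eq hxy hTS
  set u : ι → MvPolynomial ι A := fun i =>
    C (y i) + C (algebraMap R A t) ^ (c + 1) * (T.map C *ᵥ X) i
  set v : ι → MvPolynomial ι A := fun i => C (algebraMap R A t) * g i - (S.map C *ᵥ X) i
  have htD : algebraMap R (MvPolynomial ι A) t ∈ nonZeroDivisors (MvPolynomial ι A) :=
    algebraMap_mvPolynomial_mem_nonZeroDivisors hτA
  have hsurj : SurjectiveMod (Submonoid.powers t) ⊥ (aevalOver R B (Sum.elim u v)) :=
    surjectiveMod_gluing hxt hT (fun _ => rfl) hg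
  have hinj : InjectiveMod (Ideal.span {t}) (aevalOver R B (Sum.elim u v)) :=
    injectiveMod_gluing hy hS (fun i => ⟨C (algebraMap R A t) ^ c * (T.map C *ᵥ X) i, by
      simp only [u]; ring⟩) (fun i => ⟨g i, by simp only [v]; ring⟩)
  have hxσ : Function.Injective (aevalOver R B (adjoinVars ι x)) :=
    injectiveMod_bot_iff.1 (injectiveMod_bot_iff.2 hx).adjoinVars
  exact ⟨AlgEquiv.ofBijective (aeval (Sum.elim u v))
    ⟨injective_of_surjectiveMod_powers htD hxσ hxt.adjoinVars hsurj,
      surjective_of_injectiveMod_span_singleton htD hsurj hinj⟩⟩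

end Gluing

section Jacobian

open scoped Matrix

lemma mul_eq_smul_one_comm {A ι : Type*} [CommRing A] [Fintype ι] [DecidableEq ι] {s : A}
    (hs : s ∈ nonZeroDivisors A) {P P' : Matrix ι ι A} (h : P' * P = s • 1) : P * P' = s • 1 := by
  have hdet : P'.det * P.det = s ^ Fintype.card ι := by
    rw [← Matrix.det_mul, h, Matrix.det_smul, Matrix.det_one, mul_one]
  have hP : P.det • (P * P' - s • 1) = 0 := by
    have hmul : (P * P' - s • 1) * P = 0 := by simp [sub_mul, mul_assoc, h]
    simpa [mul_assoc, Matrix.mul_adjugate] using congrArg (· * P.adjugate) hmul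
  rw [← sub_eq_zero]
  ext i j
  have hij : P.det * (P * P' - s • 1) i j = 0 := congrFun (congrFun hP i) j
  refine (mem_nonZeroDivisors_iff.1 (pow_mem hs (Fintype.card ι))).1 _ ?_
  rw [← hdet, mul_assoc, hij, mul_zero]

lemma exists_inverse_mod_pow {A ι : Type*} [CommRing A] [Fintype ι] [DecidableEq ι] {τ : A}
    {M J E : Matrix ι ι A} (h : M * J = 1 + τ • E) (k : ℕ) :
    ∃ (J' : Matrix ι ι A) (b : A), J * J' = (1 - τ ^ k * b) • 1 ∧
      J' * J = (1 - τ ^ k * b) • 1 := by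
  obtain ⟨a, ha⟩ : ∃ a, (1 + τ • E).det = 1 + τ * a :=
    ⟨_, by rw [Matrix.det_one_add_smul, add_assoc, sq, ← mul_assoc, ← add_mul, mul_comm _ τ]⟩
  rw [← h, Matrix.det_mul] at ha
  obtain ⟨d, b, hdb⟩ : IsCoprime J.det (τ ^ k) :=
    IsCoprime.pow_right ⟨M.det, -a, by rw [ha]; ring⟩
  have hd : d * J.det = 1 - τ ^ k * b := by rw [← hdb]; ring
  exact ⟨d • J.adjugate, b, by rw [Matrix.mul_smul, Matrix.mul_adjugate, smul_smul, hd],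
    by rw [Matrix.smul_mul, Matrix.adjugate_mul, smul_smul, hd]⟩

-- Whitehead's lemma: `diag(J, J⁻¹)` is elementary, and the product of elementary matrices which
-- represents it still makes sense when `J` is only invertible up to `e`.
lemma exists_leftInverse_fromBlocks_add {A ι : Type*} [CommRing A] [Fintype ι] [DecidableEq ι]
    {J J' : Matrix ι ι A} {e : A} (hJJ' : J * J' = e • 1) (hJ'J : J' * J = e • 1) :
    ∃ L, L * (Matrix.fromBlocks J 0 0 J' + (1 - e) • Matrix.fromBlocks J (-1) 1 0) = 1 := by
  refine ⟨Matrix.fromBlocks J' ((1 - e) • 1) ((e - 1) • 1) ((2 - e) • J), ?_⟩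
  rw [Matrix.fromBlocks_smul, Matrix.fromBlocks_add, Matrix.fromBlocks_multiply,
    ← Matrix.fromBlocks_one]
  congr 1 <;> simp only [mul_add, Matrix.mul_smul, Matrix.smul_mul, hJJ', hJ'J, mul_one, one_mul,
    mul_zero, mul_neg] <;> module

lemma exists_stable_matrix_factorization {A ι : Type*} [CommRing A] [Fintype ι] [DecidableEq ι]
    {τ : A} {c : ℕ} {P P' H M J E F : Matrix ι ι A} (hP : P * P' = τ ^ c • 1)
    (hM : M * J = 1 + τ • E) (hPH : P = H * J + τ ^ (2 * c + 2) • F) :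
    ∃ T T' S S' E' : Matrix (ι ⊕ ι) (ι ⊕ ι) A, T' * T = τ ^ c • 1 ∧ S * S' = 1 + τ • E' ∧
      Matrix.fromBlocks H 0 0 1 * T = τ ^ c • S := by
  obtain ⟨J', b, hJJ', hJ'J⟩ := exists_inverse_mod_pow hM (2 * c + 2)
  obtain ⟨L, hL⟩ := exists_leftInverse_fromBlocks_add hJJ' hJ'J
  have hHJ : H * J * P' = τ ^ c • 1 - τ ^ (2 * c + 2) • (F * P') := by
    rw [← hP, hPH, add_mul, Matrix.smul_mul, add_sub_cancel_right]
  let G : Matrix (ι ⊕ ι) (ι ⊕ ι) A := τ ^ (c + 1) • (Matrix.fromBlocks (-(F * P')) 0 0 0 +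
    b • (Matrix.fromBlocks H 0 0 1 * Matrix.fromBlocks J (-1) 1 0 *
      Matrix.fromBlocks P' 0 0 (τ ^ c • 1)))
  refine ⟨(Matrix.fromBlocks J 0 0 J' + (1 - (1 - τ ^ (2 * c + 2) * b)) •
      Matrix.fromBlocks J (-1) 1 0) * Matrix.fromBlocks P' 0 0 (τ ^ c • 1),
    Matrix.fromBlocks P 0 0 1 * L, Matrix.fromBlocks 1 0 0 J' + τ • G, Matrix.fromBlocks 1 0 0 J,
    Matrix.fromBlocks 0 0 0 (-(τ ^ (2 * c + 1) * b) • 1) + G * Matrix.fromBlocks 1 0 0 J,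
    ?_, ?_, ?_⟩
  · rw [mul_assoc, ← mul_assoc L, hL, one_mul, Matrix.fromBlocks_multiply,
      ← Matrix.fromBlocks_one, Matrix.fromBlocks_smul]
    simp [hP]
  · rw [add_mul, Matrix.fromBlocks_multiply, hJ'J, smul_add, ← add_assoc,
      ← Matrix.fromBlocks_one, Matrix.fromBlocks_smul, Matrix.fromBlocks_add, Matrix.smul_mul]
    congr 2
    all_goals simp only [mul_one, mul_zero, add_zero, smul_zero, zero_mul, zero_add]
    module
  · have hblock : Matrix.fromBlocks H 0 0 1 * (Matrix.fromBlocks J 0 0 J' *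
        Matrix.fromBlocks P' 0 0 (τ ^ c • 1)) = τ ^ c • Matrix.fromBlocks 1 0 0 J' +
        τ ^ (2 * c + 2) • Matrix.fromBlocks (-(F * P')) 0 0 0 := by
      simp [Matrix.fromBlocks_multiply, Matrix.fromBlocks_smul, Matrix.fromBlocks_add,
        ← mul_assoc, hHJ, sub_eq_add_neg]
    rw [add_mul, mul_add, hblock, sub_sub_cancel, Matrix.smul_mul, Matrix.mul_smul, ← mul_assoc]
    module

variable {R B A ι : Type*} [CommRing R] [CommRing B] [CommRing A] [Algebra R B] [Algebra R A]
  [Algebra B A] [IsScalarTower R B A]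

lemma jacobian_mul_of [Fintype ι] {κ : Type*} (δ : Derivation B A (κ → A)) (y : ι → A)
    {σ : Type*} (h : σ → MvPolynomial ι B) :
    jacobian h y * Matrix.of (fun i => δ (y i)) = Matrix.of fun i => δ (aeval y (h i)) := by
  ext i k
  simp [derivation_aeval, jacobian, Matrix.mul_apply]

lemma jacobian_sumElim {σ D : Type*} [CommRing D] [Algebra B D] [DecidableEq σ]
    (h : ι → MvPolynomial ι B) (z : ι ⊕ σ → D) :
    jacobian (Sum.elim (fun i => rename Sum.inl (h i)) fun i => X (Sum.inr i)) z =
      Matrix.fromBlocks (jacobian h (z ∘ Sum.inl)) 0 0 1 := by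
  classical
  ext (i | i) (j | j)
  · simp [jacobian, pderiv_rename Sum.inl_injective, aeval_rename]
  · simp only [jacobian, Matrix.of_apply, Sum.elim_inl, Matrix.fromBlocks_apply₁₂,
      Matrix.zero_apply]
    rw [pderiv_eq_zero_of_notMem_vars fun hj => by simpa using vars_rename _ _ hj, map_zero]
  · simp [jacobian]
  · rcases eq_or_ne i j with rfl | hij
    · simp [jacobian]
    · simp [jacobian, pderiv_X, hij]

lemma derivation_apply_mem_map {κ : Type*} (δ : Derivation B A (κ → A)) {I : Ideal R} {a : A}
    (ha : a ∈ I.map (algebraMap R A)) (j : κ) : δ a j ∈ I.map (algebraMap R A) := by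
  obtain ⟨n, b, d, hb, rfl⟩ := exists_eq_sum_of_mem_map ha
  simp only [IsScalarTower.algebraMap_apply R B A, ← Algebra.smul_def, map_sum, Derivation.map_smul,
    Finset.sum_apply, Pi.smul_apply]
  refine sum_mem fun k _ => ?_
  rw [Algebra.smul_def, ← IsScalarTower.algebraMap_apply]
  exact Ideal.mul_mem_right _ _ (Ideal.mem_map_of_mem _ (hb k))

lemma SurjectiveMod.exists_vecMul_eq_smul [Fintype ι] {S : Submonoid R} {I : Ideal R} {x : ι → A}
    (hx : SurjectiveMod S I (aevalOver R B x)) {κ : Type*} {δ : Derivation B A (κ → A)}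
    (hδ : Submodule.span A (Set.range δ) = ⊤) (v : κ → A) :
    ∃ s ∈ S, ∃ r, ∀ j, (r ᵥ* Matrix.of (fun i => δ (x i)) - algebraMap R A s • v) j ∈
      I.map (algebraMap R A) := by
  induction (hδ ▸ trivial : v ∈ Submodule.span A (Set.range δ)) using Submodule.span_induction with
  | mem v hv =>
    obtain ⟨a, rfl⟩ := hv
    obtain ⟨s, hs, p, hp⟩ := hx a
    refine ⟨s, hs, fun i => aeval x (pderiv i p), fun j => ?_⟩
    convert neg_mem (derivation_apply_mem_map δ hp j) using 1
    have hsa : δ (algebraMap R A s * a) = algebraMap R A s • δ a := by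
      rw [IsScalarTower.algebraMap_apply R B A, ← Algebra.smul_def, Derivation.map_smul,
        ← algebraMap_smul A (algebraMap R B s)]
    have hp' : δ (aevalOver R B x p) = (fun i => aeval x (pderiv i p)) ᵥ*
        Matrix.of (fun i => δ (x i)) := by
      ext k
      simp [derivation_aeval, Matrix.vecMul, dotProduct]
    rw [map_sub, hsa, hp', ← Pi.neg_apply, neg_sub]
  | zero => exact ⟨1, S.one_mem, 0, by simp⟩
  | add v w _ _ hv hw =>
    obtain ⟨s, hs, r, h⟩ := hv
    obtain ⟨s', hs', r', h'⟩ := hw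
    refine ⟨s * s', S.mul_mem hs hs', algebraMap R A s' • r + algebraMap R A s • r', fun j => ?_⟩
    convert add_mem (Ideal.mul_mem_left _ (algebraMap R A s') (h j))
      (Ideal.mul_mem_left _ (algebraMap R A s) (h' j)) using 1
    simp only [Matrix.add_vecMul, Matrix.smul_vecMul, map_mul, Pi.sub_apply, Pi.add_apply,
      Pi.smul_apply, smul_eq_mul]
    ring
  | smul a v _ hv =>
    obtain ⟨s, hs, r, h⟩ := hv
    refine ⟨s, hs, a • r, fun j => ?_⟩
    convert Ideal.mul_mem_left _ a (h j) using 1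
    simp only [Matrix.smul_vecMul, Pi.sub_apply, Pi.smul_apply, smul_eq_mul]
    ring

lemma SurjectiveMod.exists_mul_eq_smul_one [Fintype ι] [DecidableEq ι] {S : Submonoid R}
    {I : Ideal R} {x : ι → A} (hx : SurjectiveMod S I (aevalOver R B x))
    {δ : Derivation B A (ι → A)} (hδ : Submodule.span A (Set.range δ) = ⊤) :
    ∃ s ∈ S, ∃ M : Matrix ι ι A, ∀ i j,
      (M * Matrix.of (fun i => δ (x i)) - algebraMap R A s • 1) i j ∈ I.map (algebraMap R A) := by
  choose s hs r hr using fun i : ι => hx.exists_vecMul_eq_smul hδ (Pi.single i 1)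
  refine ⟨∏ i, s i, prod_mem fun i _ => hs i,
    Matrix.of fun i => algebraMap R A (∏ l ∈ Finset.univ.erase i, s l) • r i, fun i j => ?_⟩
  convert Ideal.mul_mem_left _ (algebraMap R A (∏ l ∈ Finset.univ.erase i, s l)) (hr i j) using 1
  rw [← Finset.prod_erase_mul _ _ (Finset.mem_univ i)]
  simp [-algebraMap_smul, Matrix.mul_apply, Matrix.vecMul, dotProduct, Matrix.one_apply,
    Pi.single_apply, Finset.mul_sum, mul_sub, mul_assoc, mul_left_comm, mul_comm, eq_comm]

end Jacobian

section StableGluing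

variable {R B A ι : Type*} [CommRing R] [CommRing B] [CommRing A] [Algebra R B] [Algebra R A]
  [Algebra B A] [IsScalarTower R B A] [IsNoetherianRing B]

theorem nonempty_algEquiv_of_stable_gluing [Fintype ι] [DecidableEq ι] {t : R}
    (htA : algebraMap R A t ∈ nonZeroDivisors A) {x y : ι → A}
    (hx : Function.Injective (aevalOver R B x))
    (hxt : SurjectiveMod (Submonoid.powers t) ⊥ (aevalOver R B x))
    (hy : InjectiveMod (Ideal.span {t}) (aevalOver R B y)) {h : ι → MvPolynomial ι B} {a c : ℕ}
    (hxy : ∀ i, algebraMap R A t ^ (2 * c + 2) ∣ x i - aeval y (h i))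
    {T T' S S' E : Matrix (ι ⊕ ι) (ι ⊕ ι) A}
    (hTS : Matrix.fromBlocks (jacobian h y) 0 0 1 * T = algebraMap R A t ^ c • S)
    (hT : T' * T = algebraMap R A t ^ a • 1) (hS : S * S' = 1 + algebraMap R A t • E) :
    Nonempty (MvPolynomial ((ι ⊕ ι) ⊕ (ι ⊕ ι)) B ≃ₐ[B]
      MvPolynomial (ι ⊕ ι) (MvPolynomial ι A)) := by
  have hsmul : ∀ (d : A) (N : Matrix (ι ⊕ ι) (ι ⊕ ι) A),
      (d • N).map (C (σ := ι)) = C (σ := ι) d • N.map (C (σ := ι)) :=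
    fun d N => Matrix.ext fun i j => by simp
  refine nonempty_algEquiv_of_gluing (R := R) (t := t) (τ := C (algebraMap R A t))
    (x := adjoinVars ι x) (y := adjoinVars ι y) (a := a) (c := c)
    (h := Sum.elim (fun i => rename Sum.inl (h i)) fun i => X (Sum.inr i))
    (T := T.map C) (T' := T'.map C) (S := S.map C) (S' := S'.map C) (E := E.map C) rfl
    (algebraMap_mvPolynomial_mem_nonZeroDivisors htA)
    (injectiveMod_bot_iff.1 (injectiveMod_bot_iff.2 hx).adjoinVars) hxt.adjoinVars hy.adjoinVars
    ?_ ?_ ?_ ?_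
  · rintro (i | i)
    · simpa [aeval_adjoinVars_rename_inl] using map_dvd C (hxy i)
    · simp
  · have hJ : jacobian h (adjoinVars ι y ∘ Sum.inl) = (jacobian h y).map C := jacobian_C h y
    rw [jacobian_sumElim, hJ, ← map_pow, ← hsmul, ← hTS, Matrix.map_mul, Matrix.fromBlocks_map,
      Matrix.map_zero _ (map_zero C), Matrix.map_one _ (map_zero C) (map_one C)]
  · rw [← Matrix.map_mul, hT, hsmul, map_pow, Matrix.map_one _ (map_zero C) (map_one C)]
  · rw [← Matrix.map_mul, hS, Matrix.map_add _ (map_add C), hsmul,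
      Matrix.map_one _ (map_zero C) (map_one C)]

theorem nonempty_algEquiv_of_injectiveMod_of_surjectiveMod [Finite ι] {t : R}
    (htA : algebraMap R A t ∈ nonZeroDivisors A) {x y : ι → A}
    (hx : Function.Injective (aevalOver R B x))
    (hxt : SurjectiveMod (Submonoid.powers t) ⊥ (aevalOver R B x))
    (hy : InjectiveMod (Ideal.span {t}) (aevalOver R B y))
    (hyt : SurjectiveMod ⊥ (Ideal.span {t}) (aevalOver R B y))
    {δ : Derivation B A (ι → A)} (hδ : Submodule.span A (Set.range δ) = ⊤) :
    Nonempty (MvPolynomial ((ι ⊕ ι) ⊕ (ι ⊕ ι)) B ≃ₐ[B]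
      MvPolynomial (ι ⊕ ι) (MvPolynomial ι A)) := by
  classical
  have := Fintype.ofFinite ι
  set τ := algebraMap R A t
  obtain ⟨_, ⟨c, rfl⟩, P', hP'⟩ := hxt.exists_mul_eq_smul_one hδ
  obtain ⟨s, hs, M, hM⟩ := hyt.exists_mul_eq_smul_one hδ
  rw [Submonoid.mem_bot] at hs
  subst hs
  simp only [mem_map_span_singleton] at hM
  choose E hE using hM
  have hτP : P' * Matrix.of (fun i => δ (x i)) = τ ^ c • 1 := by
    ext i j
    simpa [sub_eq_zero] using hP' i j
  have hτM : M * Matrix.of (fun i => δ (y i)) = 1 + τ • Matrix.of E := by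
    ext i j
    simpa [sub_eq_iff_eq_add'] using hE i j
  have hpow := surjectiveMod_bot_iff.1 (hyt.pow (2 * c + 2))
  simp only [Ideal.span_singleton_pow, mem_map_span_singleton, map_pow] at hpow
  choose h e he using fun i => hpow (x i)
  have hPH : Matrix.of (fun i => δ (x i)) = jacobian h y * Matrix.of (fun i => δ (y i)) +
      τ ^ (2 * c + 2) • Matrix.of fun i => δ (e i) := by
    rw [jacobian_mul_of]
    ext i j
    have hxi : x i = aeval y (h i) + algebraMap R B t ^ (2 * c + 2) • e i := by
      rw [Algebra.smul_def, map_pow, ← IsScalarTower.algebraMap_apply, ← he,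
        AlgHom.restrictScalars_apply, add_sub_cancel]
    simp only [Matrix.add_apply, Matrix.smul_apply, Matrix.of_apply]
    rw [hxi, map_add, Derivation.map_smul, ← algebraMap_smul A (algebraMap R B t ^ (2 * c + 2)),
      map_pow, ← IsScalarTower.algebraMap_apply]
    rfl
  obtain ⟨T, T', S, S', E', hT, hS, hTS⟩ :=
    exists_stable_matrix_factorization (mul_eq_smul_one_comm (pow_mem htA c) hτP) hτM hPH
  exact nonempty_algEquiv_of_stable_gluing htA hx hxt hy (fun i => ⟨e i, he i⟩) hTS hT hS

end StableGluing

section Reduction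

variable {R C D C' D' : Type*} [CommRing R] [CommRing C] [CommRing D] [CommRing C'] [CommRing D']
  [Algebra R C] [Algebra R D] [Algebra R C'] [Algebra R D']

/-- The homomorphism `π : D → D'` identifies `D'` with the reduction `D ⧸ ID` of `D` modulo the
ideal `I` of the base ring. -/
structure IsReduction (I : Ideal R) (π : D →ₐ[R] D') : Prop where
  surjective : Function.Surjective π
  ker_eq : RingHom.ker π = I.map (algebraMap R D)

lemma IsReduction.apply_mem_map_iff {I : Ideal R} {π : D →ₐ[R] D'} (hπ : IsReduction I π)
    (J : Ideal R) (d : D) :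
    π d ∈ J.map (algebraMap R D') ↔ d ∈ (I ⊔ J).map (algebraMap R D) := by
  rw [← π.comp_algebraMap, ← Ideal.map_map, Ideal.map_sup, ← hπ.ker_eq, sup_comm,
    ← Ideal.comap_map_of_surjective' π hπ.surjective, Ideal.mem_comap]
  rfl

variable {I : Ideal R} {π : C →ₐ[R] C'} {ρ : D →ₐ[R] D'} {θ : C →ₐ[R] D} {θ' : C' →ₐ[R] D'}

lemma IsReduction.injectiveMod_iff (hπ : IsReduction I π) (hρ : IsReduction I ρ)
    (hθ : ∀ c, θ' (π c) = ρ (θ c)) (J : Ideal R) :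
    InjectiveMod J θ' ↔ InjectiveMod (I ⊔ J) θ := by
  simp only [InjectiveMod, hπ.surjective.forall, hθ, hρ.apply_mem_map_iff, hπ.apply_mem_map_iff]

lemma IsReduction.surjectiveMod_iff (hπ : IsReduction I π) (hρ : IsReduction I ρ)
    (hθ : ∀ c, θ' (π c) = ρ (θ c)) (S : Submonoid R) (J : Ideal R) :
    SurjectiveMod S J θ' ↔ SurjectiveMod S (I ⊔ J) θ := by
  have hmem : ∀ d c s, algebraMap R D' s * ρ d - θ' (π c) ∈ J.map (algebraMap R D') ↔
      algebraMap R D s * d - θ c ∈ (I ⊔ J).map (algebraMap R D) := fun d c s => by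
    rw [hθ, ← ρ.commutes, ← map_mul, ← map_sub, hρ.apply_mem_map_iff]
  change (∀ d', ∃ s ∈ S, ∃ c', _ ∈ _) ↔ ∀ d, ∃ s ∈ S, ∃ c, _ ∈ _
  simp only [hρ.surjective.forall, hπ.surjective.exists, hmem]

lemma isReduction_mapAlgHom (σ : Type*) (hρ : IsReduction I ρ) :
    IsReduction I (mapAlgHom (σ := σ) ρ) where
  surjective := map_surjective _ hρ.surjective
  ker_eq := by
    ext p
    have hker : ∀ d, ρ d = 0 ↔ d ∈ I.map (algebraMap R D) := fun d => by
      rw [← hρ.ker_eq, RingHom.mem_ker]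
    simp [RingHom.mem_ker, mem_map_algebraMap_iff_coeff, MvPolynomial.ext_iff, coeff_map, hker]

lemma isReduction_mkₐ (I : Ideal R) :
    IsReduction I (Ideal.Quotient.mkₐ R (I.map (algebraMap R D))) :=
  ⟨Ideal.Quotient.mkₐ_surjective R _, Ideal.Quotient.mkₐ_ker R _⟩

lemma isReduction_includeRight {B A : Type*} [CommRing B] [CommRing A] [Algebra R B] [Algebra R A]
    [Algebra B A] [IsScalarTower R B A] (I : Ideal R) :
    IsReduction I ((Algebra.TensorProduct.includeRight :
      A →ₐ[B] (B ⧸ I.map (algebraMap R B)) ⊗[B] A).restrictScalars R) where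
  surjective := Algebra.TensorProduct.includeRight_surjective _ Ideal.Quotient.mk_surjective
  ker_eq := by
    ext a
    rw [RingHom.mem_ker, IsScalarTower.algebraMap_eq R B A, ← Ideal.map_map,
      ← Ideal.Quotient.eq_zero_iff_mem,
      ← EmbeddingLike.map_eq_zero_iff
        (f := Algebra.TensorProduct.quotIdealMapEquivQuotTensor A (I.map (algebraMap R B)))]
    rfl

end Reduction

section Kaehler

open KaehlerDifferential

lemma nonempty_linearEquiv_kaehler_of_formallySmooth (B A T : Type*) [CommRing B] [CommRing A]
    [CommRing T] [Algebra B A] [Algebra B T] [Algebra A T] [IsScalarTower B A T]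
    [Algebra.FormallySmooth A T] : Nonempty (Ω[T⁄B] ≃ₗ[T] (T ⊗[A] Ω[A⁄B]) × Ω[T⁄A]) := by
  have hinj : Function.Injective (mapBaseChange B A T) := by
    rw [injective_iff_map_eq_zero]
    intro x hx
    obtain ⟨y, rfl⟩ := (Algebra.H1Cotangent.exact_δ_mapBaseChange B A T x).1 hx
    rw [Subsingleton.elim y 0, map_zero]
  obtain ⟨s, hs⟩ := Module.projective_lifting_property _ .id (map_surjective B A T)
  obtain ⟨e, -⟩ := (exact_mapBaseChange_map B A T).splitSurjectiveEquiv hinj ⟨s, hs⟩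
  exact ⟨e⟩

variable {B A : Type*} [CommRing B] [CommRing A] [Algebra B A]

lemma nonempty_linearEquiv_kaehler_mvPolynomial (σ : Type*) [Finite σ] :
    Nonempty (Ω[MvPolynomial σ A⁄B] ≃ₗ[MvPolynomial σ A]
      (MvPolynomial σ A ⊗[A] Ω[A⁄B]) × (σ → MvPolynomial σ A)) := by
  obtain ⟨e⟩ := nonempty_linearEquiv_kaehler_of_formallySmooth B A (MvPolynomial σ A)
  exact ⟨e.trans (.prodCongr (.refl _ _)
    ((mvPolynomialEquiv A σ).trans (Finsupp.linearEquivFunOnFinite _ _ _)))⟩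

lemma exists_surjective_tensor_of_surjective {M ι : Type*} [AddCommGroup M] [Module A M] [Finite ι]
    (T : Type*) [CommRing T] [Algebra A T] {f : M →ₗ[A] ι → A} (hf : Function.Surjective f) :
    ∃ g : T ⊗[A] M →ₗ[T] ι → T, Function.Surjective g := by
  classical
  cases nonempty_fintype ι
  exact ⟨(TensorProduct.piScalarRight A T T ι).toLinearMap ∘ₗ f.baseChange T,
    (TensorProduct.piScalarRight A T T ι).surjective.comp (LinearMap.lTensor_surjective T hf)⟩

lemma exists_surjective_kaehler_mvPolynomial_of_prod {ι σ : Type*} [Finite ι] [Finite σ]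
    {f : Ω[A⁄B] × (σ → A) →ₗ[A] ι → A} (hf : Function.Surjective f) :
    ∃ g : Ω[MvPolynomial σ A⁄B] →ₗ[MvPolynomial σ A] ι → MvPolynomial σ A,
      Function.Surjective g := by
  classical
  cases nonempty_fintype σ
  let T := MvPolynomial σ A
  obtain ⟨e⟩ := nonempty_linearEquiv_kaehler_mvPolynomial (B := B) (A := A) σ
  obtain ⟨g, hg⟩ := exists_surjective_tensor_of_surjective T hf
  let e' : T ⊗[A] (Ω[A⁄B] × (σ → A)) ≃ₗ[T] (T ⊗[A] Ω[A⁄B]) × (σ → T) :=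
    (TensorProduct.prodRight A T T _ _).trans
      (.prodCongr (.refl _ _) (TensorProduct.piScalarRight A T T σ))
  exact ⟨g ∘ₗ (e.trans e'.symm).toLinearMap, hg.comp (LinearEquiv.surjective _)⟩

lemma exists_surjective_kaehler_mvPolynomial {ι : Type*} [Finite ι] (σ : Type*) [Finite σ]
    {f : Ω[A⁄B] →ₗ[A] ι → A} (hf : Function.Surjective f) :
    ∃ g : Ω[MvPolynomial σ A⁄B] →ₗ[MvPolynomial σ A] ι ⊕ σ → MvPolynomial σ A,
      Function.Surjective g :=
  let e := LinearEquiv.sumArrowLequivProdArrow ι σ A A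
  exists_surjective_kaehler_mvPolynomial_of_prod (f := e.symm.toLinearMap ∘ₗ f.prodMap .id)
    (e.symm.surjective.comp (hf.prodMap Function.surjective_id))

lemma exists_surjective_kaehler_baseChange {ι : Type*} [Finite ι] (B' : Type*) [CommRing B']
    [Algebra B B'] {f : Ω[A⁄B] →ₗ[A] ι → A} (hf : Function.Surjective f) :
    ∃ g : Ω[B' ⊗[B] A⁄B'] →ₗ[B' ⊗[B] A] ι → B' ⊗[B] A, Function.Surjective g := by
  let _ := Algebra.TensorProduct.rightAlgebra (R := B) (A := B') (B := A)
  obtain ⟨g, hg⟩ := exists_surjective_tensor_of_surjective (B' ⊗[B] A) hf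
  exact ⟨g ∘ₗ (tensorKaehlerEquiv B B' A (B' ⊗[B] A)).symm.toLinearMap,
    hg.comp (LinearEquiv.surjective _)⟩

lemma span_range_compDer_of_surjective {M : Type*} [AddCommGroup M] [Module A M] [Module B M]
    [IsScalarTower B A M] {f : Ω[A⁄B] →ₗ[A] M} (hf : Function.Surjective f) :
    Submodule.span A (Set.range (f.compDer (D B A))) = ⊤ := by
  have hrange : Set.range (f.compDer (D B A)) = f '' Set.range (D B A) := by
    rw [← Set.range_comp]
    rfl
  rw [hrange, Submodule.span_image, span_range_derivation, Submodule.map_top,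
    LinearMap.range_eq_top.2 hf]

end Kaehler

section Lift

variable {R B A B' A' ι : Type*} [CommRing R] [CommRing B] [CommRing A] [CommRing B'] [CommRing A']
  [Algebra R B] [Algebra R A] [Algebra B A] [IsScalarTower R B A] [Algebra R B'] [Algebra R A']
  [Algebra B' A'] [IsScalarTower R B' A'] {π : B →ₐ[R] B'} {ρ : A →ₐ[R] A'}

lemma aevalOver_comp_mapAlgHom (hcomm : ∀ b, ρ (algebraMap B A b) = algebraMap B' A' (π b))
    (x : ι → A) (p : MvPolynomial ι B) :
    aevalOver R B' (ρ ∘ x) (mapAlgHom π p) = ρ (aevalOver R B x p) := by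
  induction p using MvPolynomial.induction_on with
  | C b => simp [hcomm]
  | add p q hp hq => simp only [map_add, hp, hq]
  | mul_X p i hp => simp_all

lemma IsReduction.algebraMap_mem_nonZeroDivisors [Module.Flat R A] {I : Ideal R}
    (hρ : IsReduction I ρ) {t : R} (ht : ∀ r, t * r ∈ I → r ∈ I) :
    algebraMap R A' t ∈ nonZeroDivisors A' := by
  refine mem_nonZeroDivisors_iff_left.2 (hρ.surjective.forall.2 fun a ha => ?_)
  rw [← ρ.commutes, ← map_mul, ← RingHom.mem_ker, hρ.ker_eq] at ha
  rw [← RingHom.mem_ker, hρ.ker_eq]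
  exact mem_map_of_algebraMap_mul_mem_map ht ha

lemma IsReduction.exists_injectiveMod_and_surjectiveMod {I : Ideal R} (hπ : IsReduction I π)
    (hρ : IsReduction I ρ) (hcomm : ∀ b, ρ (algebraMap B A b) = algebraMap B' A' (π b))
    (e : MvPolynomial ι B' ≃ₐ[B'] A') :
    ∃ x : ι → A, InjectiveMod I (aevalOver R B x) ∧ SurjectiveMod ⊥ I (aevalOver R B x) := by
  choose x hx using fun i => hρ.surjective (e (X i))
  have he : ∀ p, aevalOver R B' (ρ ∘ x) p = e p := fun p => by
    rw [show ρ ∘ x = e ∘ X from funext hx]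
    exact (DFunLike.congr_fun (aeval_unique e.toAlgHom) p).symm
  have hθ := aevalOver_comp_mapAlgHom hcomm x
  have hπ' := isReduction_mapAlgHom ι hπ
  refine ⟨x, ?_, ?_⟩
  · rw [← sup_bot_eq I, ← hπ'.injectiveMod_iff hρ hθ, injectiveMod_bot_iff]
    exact fun p q hpq => e.injective (by rwa [he, he] at hpq)
  · rw [← sup_bot_eq I, ← hπ'.surjectiveMod_iff hρ hθ, surjectiveMod_bot_iff]
    exact fun d => ⟨e.symm d, by simp [he]⟩

end Lift

section Induction

universe u

variable {R B A : Type*} {ι : Type u} [CommRing R] [CommRing B] [CommRing A] [Algebra R B]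
  [Algebra R A] [Algebra B A] [IsScalarTower R B A]

variable (R B A ι) in
/-- Modulo the ideal `I` of the base ring, `A` becomes a polynomial algebra in variables `ι` over
`B` after adjoining finitely many variables to both algebras. The stable coordinates are lifted to
polynomials over `A` itself. -/
def IsStablyPolynomialMod (I : Ideal R) : Prop :=
  ∃ (σ : Type u) (_ : Finite σ) (y : ι ⊕ σ → MvPolynomial σ A),
    InjectiveMod I (aevalOver R B y) ∧ SurjectiveMod ⊥ I (aevalOver R B y)

lemma isStablyPolynomialMod_top : IsStablyPolynomialMod R B A ι ⊤ :=
  ⟨PEmpty, inferInstance, 0, fun c _ => by simp [Ideal.map_top],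
    surjectiveMod_bot_iff.2 fun d => ⟨0, by simp [Ideal.map_top]⟩⟩

lemma IsStablyPolynomialMod.of_mul_le [Module.Flat R A] {I J : Ideal R} (hJJ : J * J ≤ I)
    (hIJ : I ≤ J) (hJ : IsStablyPolynomialMod R B A ι J) : IsStablyPolynomialMod R B A ι I := by
  obtain ⟨σ, hσ, y, hy, hy'⟩ := hJ
  have : Module.Flat R (MvPolynomial σ A) := .trans R A _
  exact ⟨σ, hσ, y, hy.of_mul_le hJJ hIJ hy', (hy'.mul hy').mono hJJ⟩

lemma nonempty_algEquiv_of_stable_algEquiv {κ σ : Type*} [Finite ι] [Finite κ] [Finite σ]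
    (hκ : Nat.card κ = Nat.card ι + Nat.card σ)
    (e : MvPolynomial ((κ ⊕ κ) ⊕ (κ ⊕ κ)) B ≃ₐ[B]
      MvPolynomial (κ ⊕ κ) (MvPolynomial κ (MvPolynomial σ A))) :
    Nonempty (MvPolynomial (ι ⊕ (((κ ⊕ κ) ⊕ κ) ⊕ σ)) B ≃ₐ[B]
      MvPolynomial (((κ ⊕ κ) ⊕ κ) ⊕ σ) A) := by
  have hcard : Nat.card (ι ⊕ (((κ ⊕ κ) ⊕ κ) ⊕ σ)) = Nat.card ((κ ⊕ κ) ⊕ (κ ⊕ κ)) := by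
    simp only [Nat.card_sum, hκ]
    ring
  obtain ⟨g⟩ := Finite.card_eq.1 hcard
  exact ⟨(renameEquiv B g).trans <| e.trans <|
    ((sumAlgEquiv (MvPolynomial σ A) (κ ⊕ κ) κ).symm.restrictScalars B).trans
      ((sumAlgEquiv A ((κ ⊕ κ) ⊕ κ) σ).symm.restrictScalars B)⟩

lemma IsReduction.isStablyPolynomialMod {B' A' : Type*} [CommRing B'] [CommRing A'] [Algebra R B']
    [Algebra R A'] [Algebra B' A'] [IsScalarTower R B' A'] [Module.Flat R A] [IsNoetherianRing B']
    [Finite ι] {I : Ideal R} {π : B →ₐ[R] B'} {ρ : A →ₐ[R] A'} (hπ : IsReduction I π)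
    (hρ : IsReduction I ρ) (hcomm : ∀ b, ρ (algebraMap B A b) = algebraMap B' A' (π b))
    {f : Ω[A'⁄B'] →ₗ[A'] ι → A'} (hf : Function.Surjective f)
    {t : R} (ht : ∀ r, t * r ∈ I → r ∈ I) {x : ι → A} (hx : InjectiveMod I (aevalOver R B x))
    (hxt : SurjectiveMod (Submonoid.powers t) I (aevalOver R B x))
    (h : IsStablyPolynomialMod R B A ι (I ⊔ Ideal.span {t})) :
    IsStablyPolynomialMod R B A ι I := by
  obtain ⟨σ, _, y, hy, hyt⟩ := h
  have htA : algebraMap R (MvPolynomial σ A') t ∈ nonZeroDivisors _ :=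
    algebraMap_mvPolynomial_mem_nonZeroDivisors (hρ.algebraMap_mem_nonZeroDivisors ht)
  obtain ⟨g, hg⟩ := exists_surjective_kaehler_mvPolynomial σ hf
  have hπσ := isReduction_mapAlgHom (ι ⊕ σ) hπ
  have hρσ := isReduction_mapAlgHom σ hρ
  have hcommσ (τ : Type u) (b : B) : mapAlgHom ρ (algebraMap B (MvPolynomial τ A) b) =
      algebraMap B' (MvPolynomial τ A') (π b) := by
    simp [MvPolynomial.algebraMap_apply, hcomm]
  have hθ := aevalOver_comp_mapAlgHom (ι := ι ⊕ σ) (hcommσ σ)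
  obtain ⟨e⟩ := nonempty_algEquiv_of_injectiveMod_of_surjectiveMod htA
    (x := mapAlgHom ρ ∘ adjoinVars σ x) (y := mapAlgHom ρ ∘ y)
    (by simpa only [← injectiveMod_bot_iff, hπσ.injectiveMod_iff hρσ (hθ _), sup_bot_eq]
      using hx.adjoinVars)
    (by simpa only [hπσ.surjectiveMod_iff hρσ (hθ _), sup_bot_eq] using hxt.adjoinVars)
    ((hπσ.injectiveMod_iff hρσ (hθ _) _).2 hy) ((hπσ.surjectiveMod_iff hρσ (hθ _) _ _).2 hyt)
    (span_range_compDer_of_surjective hg)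
  obtain ⟨e'⟩ := nonempty_algEquiv_of_stable_algEquiv (ι := ι) Nat.card_sum e
  exact ⟨_, inferInstance, hπ.exists_injectiveMod_and_surjectiveMod (isReduction_mapAlgHom _ hρ)
    (hcommσ _) e'⟩

lemma IsStablyPolynomialMod.of_sup_span_singleton [Module.Flat R A] [IsNoetherianRing B] [Finite ι]
    {f : Ω[A⁄B] →ₗ[A] ι → A} (hf : Function.Surjective f) {I : Ideal R} {t : R}
    (ht : ∀ r, t * r ∈ I → r ∈ I) {x : ι → A} (hx : InjectiveMod I (aevalOver R B x))
    (hxt : SurjectiveMod (Submonoid.powers t) I (aevalOver R B x))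
    (h : IsStablyPolynomialMod R B A ι (I ⊔ Ideal.span {t})) :
    IsStablyPolynomialMod R B A ι I := by
  obtain ⟨g, hg⟩ := exists_surjective_kaehler_baseChange (B ⧸ I.map (algebraMap R B)) hf
  exact (isReduction_mkₐ I).isStablyPolynomialMod (isReduction_includeRight I)
    (fun b => AlgHom.commutes (Algebra.TensorProduct.includeRight : A →ₐ[B] _ ⊗[B] A) b)
    hg ht hx hxt h

end Induction

section Fibre

variable {R C D : Type*} [CommRing R] [CommRing C] [CommRing D] [Algebra R C] [Algebra R D]
  (P : Ideal R) [P.IsPrime]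

/-- The homomorphism induced by `θ : C → D` on the fibres at the prime `P` of the base ring. -/
noncomputable abbrev fibreMap (θ : C →ₐ[R] D) :
    P.ResidueField ⊗[R] C →ₐ[R] P.ResidueField ⊗[R] D :=
  Algebra.TensorProduct.map (AlgHom.id R P.ResidueField) θ

lemma exists_algebraMap_mul_mem_map_of_one_tmul_eq_zero {d : D}
    (h : (1 : P.ResidueField) ⊗ₜ[R] d = 0) :
    ∃ s ∉ P, algebraMap R D s * d ∈ P.map (algebraMap R D) := by
  let _ : Algebra D (P.Fiber D) := Algebra.TensorProduct.rightAlgebra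
  let M := Algebra.algebraMapSubmonoid D P.primeCompl
  have hd : algebraMap D (Localization M) d ∈
      (P.map (algebraMap R D)).map (algebraMap D (Localization M)) := by
    refine Ideal.Quotient.eq_zero_iff_mem.1 ?_
    have hd' := (Ideal.Fiber.algEquivAux₁ P).commutes d
    exact hd'.symm.trans (by
      rw [show algebraMap D (P.Fiber D) d = 0 from h, map_zero])
  obtain ⟨_, ⟨s, hs, rfl⟩, hsd⟩ := (IsLocalization.algebraMap_mem_map_algebraMap_iff M _ _ _).1 hd
  exact ⟨s, hs, hsd⟩

variable {P}

lemma one_tmul_eq_zero_of_mem_map {d : D} (hd : d ∈ P.map (algebraMap R D)) :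
    (1 : P.ResidueField) ⊗ₜ[R] d = 0 := by
  let φ : D →ₐ[R] P.ResidueField ⊗[R] D := Algebra.TensorProduct.includeRight
  have hφ := map_mem_map_algebraMap P φ hd
  rw [IsScalarTower.algebraMap_eq R P.ResidueField, ← Ideal.map_map,
    (Ideal.map_eq_bot_iff_le_ker _).2 fun r hr => Ideal.algebraMap_residueField_eq_zero.2 hr] at hφ
  rwa [Ideal.map_bot, Ideal.mem_bot] at hφ

lemma isUnit_algebraMap_of_notMem (K : Type*) [CommRing K] [Algebra R K]
    [Algebra P.ResidueField K] [IsScalarTower R P.ResidueField K] {s : R} (hs : s ∉ P) :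
    IsUnit (algebraMap R K s) := by
  rw [IsScalarTower.algebraMap_apply R P.ResidueField K]
  exact (isUnit_iff_ne_zero.2 (mt Ideal.algebraMap_residueField_eq_zero.1 hs)).map _

variable {θ : C →ₐ[R] D}

lemma injectiveMod_of_injective_fibreMap [Module.Flat R C]
    (h : Function.Injective (fibreMap P θ)) : InjectiveMod P θ := by
  intro c hc
  have hc0 : (1 : P.ResidueField) ⊗ₜ[R] c = 0 := h (by simp [one_tmul_eq_zero_of_mem_map hc])
  obtain ⟨s, hs, hsc⟩ := exists_algebraMap_mul_mem_map_of_one_tmul_eq_zero P hc0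
  exact mem_map_of_algebraMap_mul_mem_map
    (fun r hr => ((‹P.IsPrime›).mem_or_mem hr).resolve_left hs) hsc

lemma surjectiveMod_of_surjective_fibreMap
    (h : Function.Surjective (fibreMap P θ)) : SurjectiveMod P.primeCompl P θ := by
  intro d
  obtain ⟨z, hz⟩ := h (1 ⊗ₜ d)
  obtain ⟨s, hs, c, hc⟩ := Ideal.Fiber.exists_smul_eq_one_tmul P z
  have hsd : (1 : P.ResidueField) ⊗ₜ[R] (algebraMap R D s * d - θ c) = 0 := by
    have hθ := congrArg (fibreMap P θ) hc
    rw [map_smul, hz] at hθ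
    rw [TensorProduct.tmul_sub, ← Algebra.smul_def, TensorProduct.tmul_smul, hθ]
    simp
  obtain ⟨s', hs', h'⟩ := exists_algebraMap_mul_mem_map_of_one_tmul_eq_zero P hsd
  exact ⟨s' * s, P.primeCompl.mul_mem hs' hs, algebraMap R C s' * c, by
    simpa [mul_sub, mul_assoc] using h'⟩

end Fibre

section Coordinates

lemma bijective_eval₂Hom_of_eq_mul {T S ι : Type*} [CommRing T] [CommRing S] {f : T →+* S}
    {u : ι → T} (hu : ∀ i, IsUnit (u i)) {x y : ι → S} (hxy : ∀ i, x i = f (u i) * y i)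
    (h : Function.Bijective (eval₂Hom f y)) : Function.Bijective (eval₂Hom f x) := by
  choose v huv hvu using fun i => isUnit_iff_exists.1 (hu i)
  have hC {a b : T} (hab : a * b = 1) (i : ι) : C a * (C b * X i) = X i := by
    rw [← mul_assoc, ← C_mul, hab, C_1, one_mul]
  let e : MvPolynomial ι T ≃ₐ[T] MvPolynomial ι T :=
    .ofAlgHom (aeval fun i => C (u i) * X i) (aeval fun i => C (v i) * X i)
      (by ext1 i; simpa [algebraMap_eq, mul_left_comm] using hC (hvu i) i)
      (by ext1 i; simpa [algebraMap_eq, mul_left_comm] using hC (huv i) i)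
  have he : eval₂Hom f x = (eval₂Hom f y).comp e := by
    ext i <;> simp [e, hxy]
  rw [he]
  exact h.comp e.bijective

variable {R B A ι : Type*} [CommRing R] [CommRing B] [CommRing A] [Algebra R B] [Algebra R A]
  [Algebra B A] [IsScalarTower R B A]

variable (B) in
/-- The elements `x i` of `A` induce coordinates of the fibre of `A` at `P`, as a polynomial
algebra over the fibre of `B`. Evaluating along a ring homomorphism avoids putting an algebra
structure over the fibre of `B` on the fibre of `A`. -/
def IsFibreCoordinates (P : Ideal R) [P.IsPrime] (x : ι → A) : Prop :=
  Function.Bijective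
    (eval₂Hom (fibreMap P (IsScalarTower.toAlgHom R B A)).toRingHom fun i => 1 ⊗ₜ[R] x i)

lemma exists_isFibreCoordinates_of_fibersPolynomialOver {n : ℕ}
    (h : FibersPolynomialOver R B A n) (P : Ideal R) [P.IsPrime] :
    ∃ x : Fin n → A, IsFibreCoordinates B P x := by
  let f := (fibreMap P (IsScalarTower.toAlgHom R B A)).toRingHom
  let _ := f.toAlgebra
  obtain ⟨e⟩ := h P ‹_›
  choose s hs x hx using fun i => Ideal.Fiber.exists_smul_eq_one_tmul P (e.symm (X i))
  have he : Function.Bijective (eval₂Hom f (e.symm ∘ X)) := by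
    convert e.symm.bijective using 1
    ext p
    exact (DFunLike.congr_fun (aeval_unique e.symm.toAlgHom) p).symm
  refine ⟨x, bijective_eval₂Hom_of_eq_mul
    (fun i => isUnit_algebraMap_of_notMem (P.ResidueField ⊗[R] B) (hs i)) (fun i => ?_) he⟩
  rw [← hx, Algebra.smul_def]
  simp

lemma IsFibreCoordinates.of_sub_smul_mem {P : Ideal R} [P.IsPrime] {x y : ι → A} {r : R}
    (hy : IsFibreCoordinates B P y) (hr : r ∉ P)
    (hxy : ∀ i, x i - r • y i ∈ P.map (algebraMap R A)) : IsFibreCoordinates B P x := by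
  refine bijective_eval₂Hom_of_eq_mul
    (fun _ => isUnit_algebraMap_of_notMem (P.ResidueField ⊗[R] B) hr) (fun i => ?_) hy
  have hi := one_tmul_eq_zero_of_mem_map (hxy i)
  rw [TensorProduct.tmul_sub, sub_eq_zero, TensorProduct.tmul_smul] at hi
  rw [hi]
  exact (Algebra.smul_def r _).trans (by simp)

lemma IsFibreCoordinates.bijective_map {P : Ideal R} [P.IsPrime] {x : ι → A}
    (hx : IsFibreCoordinates B P x) : Function.Bijective
      (fibreMap P (aevalOver R B x)) := by
  let f := fibreMap P (IsScalarTower.toAlgHom R B (MvPolynomial ι B))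
  let ψ := eval₂Hom f.toRingHom fun i => 1 ⊗ₜ[R] X i
  have hψ : Function.Surjective ψ := by
    refine RingHom.range_eq_top.1 (top_unique fun z _ => ?_)
    induction z using TensorProduct.induction_on with
    | zero => exact zero_mem _
    | add z w hz hw => exact add_mem (hz trivial) (hw trivial)
    | tmul k p =>
      induction p using MvPolynomial.induction_on with
      | C b => exact ⟨C (k ⊗ₜ b), by simp [ψ, f, MvPolynomial.algebraMap_eq]⟩
      | add p q hp hq =>
        rw [TensorProduct.tmul_add]
        exact add_mem (hp trivial) (hq trivial)
      | mul_X p i hp =>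
        have hX : k ⊗ₜ[R] (p * X i) = k ⊗ₜ p * ψ (X i) := by simp [ψ]
        exact hX ▸ mul_mem (hp trivial) ⟨_, rfl⟩
  have hcomp : Function.Bijective (fibreMap P (aevalOver R B x) ∘ ψ) := by
    rw [IsFibreCoordinates] at hx
    convert hx using 1
    ext p
    change (fibreMap P (aevalOver R B x)).toRingHom.comp ψ p = _
    congr 1
    ext z <;> simp [f, ψ]
  exact ⟨hcomp.injective.of_comp_right hψ, hcomp.surjective.of_comp⟩

end Coordinates

section MinimalPrimes

variable {R C D : Type*} [CommRing R] [CommRing C] [CommRing D] [Algebra R C] [Algebra R D]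

/-- The elements of `R` whose residue classes are non-zero-divisors of `R ⧸ I`. -/
def regularMod (I : Ideal R) : Submonoid R where
  carrier := {t | ∀ r, t * r ∈ I → r ∈ I}
  mul_mem' := fun ha hb r hr => hb _ (ha _ (by rwa [← mul_assoc]))
  one_mem' := fun r hr => by simpa using hr

lemma mem_regularMod_of_forall_notMem {I : Ideal R} (hI : I.IsRadical) {t : R}
    (ht : ∀ P ∈ I.minimalPrimes, t ∉ P) : t ∈ regularMod I := by
  intro r hr
  rw [← hI.radical, ← Ideal.sInf_minimalPrimes, Submodule.mem_sInf]
  exact fun P hP => (hP.1.1.mem_or_mem (hP.1.2 hr)).resolve_left (ht P hP)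

lemma span_singleton_mul_le_of_forall_mem_minimalPrimes {I P : Ideal R} (hI : I.IsRadical) {e : R}
    (he : ∀ Q ∈ I.minimalPrimes, Q ≠ P → e ∈ Q) : Ideal.span {e} * P ≤ I := by
  rw [Ideal.span_singleton_mul_le_iff]
  intro r hr
  rw [← hI.radical, ← Ideal.sInf_minimalPrimes, Submodule.mem_sInf]
  intro Q hQ
  by_cases hQP : Q = P
  · exact Ideal.mul_mem_left Q e (hQP ▸ hr)
  · exact Ideal.mul_mem_right r Q (he Q hQ hQP)

lemma SurjectiveMod.exists_powers [Algebra.FiniteType R D] {S : Submonoid R} {I : Ideal R}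
    {θ : C →ₐ[R] D} (h : SurjectiveMod S I θ) :
    ∃ t ∈ S, SurjectiveMod (Submonoid.powers t) I θ := by
  obtain ⟨s, hs⟩ := Algebra.FiniteType.out (R := R) (A := D)
  choose t ht htI using h
  refine ⟨∏ d ∈ s, t d, S.prod_mem fun d _ => ht d, fun d => ?_⟩
  suffices hle : Algebra.adjoin R s ≤ saturatedRange (.powers (∏ d ∈ s, t d)) I θ from
    hle (hs ▸ trivial)
  refine Algebra.adjoin_le fun d hd => ?_
  obtain ⟨c, hc⟩ := htI d
  obtain ⟨r, hr⟩ := Finset.dvd_prod_of_mem t hd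
  refine ⟨_, Submonoid.mem_powers _, algebraMap R C r * c, ?_⟩
  convert Ideal.mul_mem_left _ (algebraMap R D r) hc using 1
  rw [hr, map_mul, map_mul, AlgHom.commutes]
  ring

variable [IsNoetherianRing R]

lemma exists_notMem_forall_mem_minimalPrimes {I P : Ideal R} (hP : P ∈ I.minimalPrimes) :
    ∃ e ∉ P, ∀ Q ∈ I.minimalPrimes, Q ≠ P → e ∈ Q := by
  let s := (Ideal.finite_minimalPrimes_of_isNoetherianRing R I).toFinset.erase P
  have hs : ¬ s.inf id ≤ P := by
    rw [hP.1.1.inf_le']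
    rintro ⟨Q, hQ, hQP⟩
    simp only [s, Finset.mem_erase, Set.Finite.mem_toFinset] at hQ
    exact hQ.1 (le_antisymm hQP (hP.2 hQ.2.1 hQP))
  obtain ⟨e, he, heP⟩ := SetLike.not_le_iff_exists.1 hs
  have hle {Q : Ideal R} (hQ : Q ∈ s) : s.inf id ≤ Q := Finset.inf_le hQ
  exact ⟨e, heP, fun Q hQ hQP => hle (by simpa [s] using ⟨hQP, hQ⟩) he⟩

lemma InjectiveMod.of_minimalPrimes [Module.Flat R C] {I : Ideal R} (hI : I.IsRadical)
    {θ : C →ₐ[R] D} (h : ∀ P ∈ I.minimalPrimes, InjectiveMod P θ) : InjectiveMod I θ := by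
  classical
  have hfin := Ideal.finite_minimalPrimes_of_isNoetherianRing R I
  choose! e he heQ using fun P (hP : P ∈ I.minimalPrimes) =>
    exists_notMem_forall_mem_minimalPrimes hP
  intro c hc
  have hsum : ∑ P ∈ hfin.toFinset, e P ∈ regularMod I := by
    refine mem_regularMod_of_forall_notMem hI fun P hP hmem => he P hP ?_
    rw [← Finset.add_sum_erase _ _ (hfin.mem_toFinset.2 hP)] at hmem
    refine (Ideal.add_mem_iff_left P (sum_mem fun Q hQ => ?_)).1 hmem
    rw [Finset.mem_erase, hfin.mem_toFinset] at hQ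
    exact heQ Q hQ.2 P hP hQ.1.symm
  refine mem_map_of_algebraMap_mul_mem_map hsum ?_
  rw [map_sum, Finset.sum_mul]
  refine sum_mem fun P hP => ?_
  rw [hfin.mem_toFinset] at hP
  exact Ideal.map_mono (span_singleton_mul_le_of_forall_mem_minimalPrimes hI (heQ P hP))
    (mul_mem_map_mul (Ideal.mem_span_singleton_self _) (h P hP (Ideal.map_mono hP.1.2 hc)))

lemma SurjectiveMod.of_minimalPrimes {I : Ideal R} (hI : I.IsRadical) {θ : C →ₐ[R] D}
    (h : ∀ (P : Ideal R) [P.IsPrime], P ∈ I.minimalPrimes → SurjectiveMod P.primeCompl P θ) :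
    SurjectiveMod (regularMod I) I θ := by
  intro d
  let T : Ideal R := ((I.map (algebraMap R D)).restrictScalars R ⊔
    LinearMap.range θ.toLinearMap).comap (LinearMap.toSpanSingleton R D d)
  have hT {t : R} : t ∈ T ↔ ∃ c, algebraMap R D t * d - θ c ∈ I.map (algebraMap R D) := by
    simp only [T, Submodule.mem_comap, Submodule.mem_sup, Algebra.smul_def,
      LinearMap.toSpanSingleton_apply, Submodule.restrictScalars_mem, LinearMap.mem_range,
      AlgHom.toLinearMap_apply, exists_exists_eq_and]
    exact ⟨fun ⟨_, hy, c, h⟩ => ⟨c, by rwa [← h, add_sub_cancel_right]⟩,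
      fun ⟨c, h⟩ => ⟨_, h, c, sub_add_cancel _ _⟩⟩
  have hTP : ∀ P ∈ I.minimalPrimes, ¬ T ≤ P := by
    intro P hP hle
    have := hP.1.1
    obtain ⟨e, he, heQ⟩ := exists_notMem_forall_mem_minimalPrimes hP
    obtain ⟨s, hs, c, hc⟩ := h P hP d
    have hes : e * s ∈ T := hT.2 ⟨algebraMap R C e * c, by
      simpa [mul_sub, mul_assoc] using
        Ideal.map_mono (span_singleton_mul_le_of_forall_mem_minimalPrimes hI heQ)
          (mul_mem_map_mul (Ideal.mem_span_singleton_self e) hc)⟩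
    exact (hP.1.1.mem_or_mem (hle hes)).elim he hs
  have hfin := Ideal.finite_minimalPrimes_of_isNoetherianRing R I
  have hav : ¬ (T : Set R) ⊆ ⋃ P ∈ (hfin.toFinset : Set (Ideal R)), (P : Set R) := by
    rw [Ideal.subset_union_prime (f := fun P => P) ⊤ ⊤
      fun P hP _ _ => (hfin.mem_toFinset.1 hP).1.1]
    rintro ⟨P, hP, hle⟩
    exact hTP P (hfin.mem_toFinset.1 hP) hle
  obtain ⟨t, htT, ht⟩ := Set.not_subset.1 hav
  refine ⟨t, mem_regularMod_of_forall_notMem hI fun P hP htP => ht ?_, hT.1 htT⟩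
  exact Set.mem_biUnion (hfin.mem_toFinset.2 hP) htP

end MinimalPrimes

section Generic

variable {R B A ι : Type*} [CommRing R] [CommRing B] [CommRing A]
  [Algebra R B] [Algebra R A] [Algebra B A] [IsScalarTower R B A]

lemma exists_isFibreCoordinates_of_minimalPrimes [IsNoetherianRing R] {I : Ideal R}
    (h : ∀ (P : Ideal R) [P.IsPrime], ∃ x : ι → A, IsFibreCoordinates B P x) :
    ∃ x : ι → A, ∀ (P : Ideal R) [P.IsPrime], P ∈ I.minimalPrimes → IsFibreCoordinates B P x := by
  classical
  have hfin := Ideal.finite_minimalPrimes_of_isNoetherianRing R I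
  choose! e he heQ using fun P (hP : P ∈ I.minimalPrimes) =>
    exists_notMem_forall_mem_minimalPrimes hP
  choose x hx using fun (P : Ideal R) (hP : P.IsPrime) => h P
  refine ⟨fun i => ∑ P : hfin.toFinset, e P • x P (hfin.mem_toFinset.1 P.2).1.1 i,
    fun P _ hP => (hx P _).of_sub_smul_mem (he P hP) fun i => ?_⟩
  rw [← Finset.add_sum_erase _ _ (Finset.mem_univ ⟨P, hfin.mem_toFinset.2 hP⟩),
    add_sub_cancel_left]
  refine sum_mem fun Q hQ => ?_
  rw [Algebra.smul_def]
  refine Ideal.mul_mem_right _ _ (Ideal.mem_map_of_mem _ (heQ Q ?_ P hP ?_))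
  · exact hfin.mem_toFinset.1 Q.2
  · rintro rfl
    exact (Finset.mem_erase.1 hQ).1 rfl

variable (R B A ι) in
/-- The `R`-algebra `A` is generically a polynomial algebra over `B`: modulo every radical ideal of
`R`, some tuple indexed by `ι` consists of coordinates on `A` over `B` after inverting a regular
element of the base. -/
def IsGenericallyPolynomial : Prop :=
  ∀ I : Ideal R, I.IsRadical → ∃ x : ι → A, ∃ t ∈ regularMod I,
    InjectiveMod I (aevalOver R B x) ∧ SurjectiveMod (Submonoid.powers t) I (aevalOver R B x)

lemma IsGenericallyPolynomial.mvPolynomial (h : IsGenericallyPolynomial R B A ι) (σ : Type*) :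
    IsGenericallyPolynomial R B (MvPolynomial σ A) (ι ⊕ σ) := fun I hI =>
  let ⟨x, t, ht, hx, hxt⟩ := h I hI
  ⟨adjoinVars σ x, t, ht, hx.adjoinVars, hxt.adjoinVars⟩

lemma isGenericallyPolynomial_of_isFibreCoordinates [IsNoetherianRing R] [Module.Flat R B]
    [Algebra.FiniteType R A]
    (h : ∀ (P : Ideal R) [P.IsPrime], ∃ x : ι → A, IsFibreCoordinates B P x) :
    IsGenericallyPolynomial R B A ι := by
  intro I hI
  have : Module.Flat R (MvPolynomial ι B) := .trans R B _
  obtain ⟨x, hx⟩ := exists_isFibreCoordinates_of_minimalPrimes h (I := I)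
  obtain ⟨t, ht, hxt⟩ := (SurjectiveMod.of_minimalPrimes hI fun P _ hP =>
    surjectiveMod_of_surjective_fibreMap (hx P hP).bijective_map.surjective).exists_powers
  refine ⟨x, t, ht, .of_minimalPrimes hI fun P hP => ?_, hxt⟩
  have := hP.1.1
  exact injectiveMod_of_injective_fibreMap (hx P hP).bijective_map.injective

end Generic

section NoetherianInduction

universe u

variable {R B A : Type*} {ι : Type u} [CommRing R] [CommRing B] [CommRing A] [Algebra R B]
  [Algebra R A] [Algebra B A] [IsScalarTower R B A] [IsNoetherianRing R] [IsNoetherianRing B]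
  [Module.Flat R A] [Finite ι]

lemma lt_sup_span_singleton_iff {R : Type*} [CommRing R] {I : Ideal R} {t : R} :
    I < I ⊔ Ideal.span {t} ↔ t ∉ I := by
  rw [left_lt_sup, Ideal.span_singleton_le_iff_mem]

lemma sup_span_singleton_mul_self_le {R : Type*} [CommRing R] {I : Ideal R} {t : R}
    (ht : t ^ 2 ∈ I) :
    (I ⊔ Ideal.span {t}) * (I ⊔ Ideal.span {t}) ≤ I := by
  rw [Ideal.sup_mul, Ideal.mul_sup (Ideal.span {t}), Ideal.span_singleton_mul_span_singleton, ← sq]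
  exact sup_le Ideal.mul_le_left
    (sup_le Ideal.mul_le_right ((Ideal.span_singleton_le_iff_mem I).2 ht))

lemma IsGenericallyPolynomial.isStablyPolynomialMod (h : IsGenericallyPolynomial R B A ι)
    {f : Ω[A⁄B] →ₗ[A] ι → A} (hf : Function.Surjective f) (I : Ideal R) :
    IsStablyPolynomialMod R B A ι I := by
  induction I using WellFoundedGT.induction with
  | ind I ih =>
    rcases eq_or_ne I ⊤ with rfl | hI
    · exact isStablyPolynomialMod_top
    by_cases hrad : I.IsRadical
    · obtain ⟨x, t, ht, hx, hxt⟩ := h I hrad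
      refine .of_sup_span_singleton hf ht hx hxt (ih _ (lt_sup_span_singleton_iff.2 fun htI => ?_))
      exact hI ((Ideal.eq_top_iff_one I).2 (ht 1 (by rwa [mul_one])))
    · rw [Ideal.isRadical_iff_pow_one_lt 2 one_lt_two] at hrad
      push Not at hrad
      obtain ⟨t, ht, htI⟩ := hrad
      exact (ih _ (lt_sup_span_singleton_iff.2 htI)).of_mul_le (sup_span_singleton_mul_self_le ht)
        le_sup_left

lemma IsGenericallyPolynomial.exists_nonempty_algEquiv (h : IsGenericallyPolynomial R B A ι)
    {f : Ω[A⁄B] →ₗ[A] ι → A} (hf : Function.Surjective f) :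
    ∃ (σ : Type u) (_ : Finite σ), Nonempty (MvPolynomial σ A ≃ₐ[B] MvPolynomial (ι ⊕ σ) B) := by
  obtain ⟨σ, hσ, y, hy, hy'⟩ := h.isStablyPolynomialMod hf ⊥
  have hinj : Function.Injective (aeval y : MvPolynomial (ι ⊕ σ) B →ₐ[B] MvPolynomial σ A) :=
    (injectiveMod_bot_iff (θ := aevalOver R B y)).1 hy
  have hsurj : Function.Surjective (aeval y : MvPolynomial (ι ⊕ σ) B →ₐ[B] MvPolynomial σ A) := by
    intro d
    obtain ⟨c, hc⟩ := surjectiveMod_bot_iff.1 hy' d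
    rw [Ideal.map_bot, Ideal.mem_bot, sub_eq_zero] at hc
    exact ⟨c, hc.symm⟩
  exact ⟨σ, hσ, ⟨(AlgEquiv.ofBijective _ ⟨hinj, hsurj⟩).symm⟩⟩

end NoetherianInduction

section Derivation

variable {R A C : Type*} [CommRing R] [CommRing A] [CommRing C] [Algebra R A] [Algebra R C]
  {P : Ideal R} [P.IsPrime]

lemma bijective_comp_of_bijective_fibreMap {θ : C →ₐ[R] A}
    (hθ : Function.Bijective (fibreMap P θ)) {E : Type*} [CommRing E] [Algebra R E]
    (ρ : P.ResidueField →ₐ[R] E) : Function.Bijective fun ψ : A →ₐ[R] E => ψ.comp θ := by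
  open Algebra.TensorProduct in
  refine ⟨fun ψ ψ' h => ?_, fun φ => ?_⟩
  · have hcomp (χ : A →ₐ[R] E) :
        (productMap ρ χ).comp (fibreMap P θ) = productMap ρ (χ.comp θ) := by ext; simp
    have hψ : productMap ρ ψ = productMap ρ ψ' :=
      (AlgHom.cancel_right hθ.surjective).1 (by rw [hcomp, hcomp]; exact congrArg _ h)
    rw [← productMap_right ρ ψ, hψ, productMap_right]
  · let e := AlgEquiv.ofBijective (fibreMap P θ) hθ
    refine ⟨((productMap ρ φ).comp e.symm.toAlgHom).comp includeRight, AlgHom.ext fun c => ?_⟩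
    have hc : e.symm (1 ⊗ₜ θ c) = 1 ⊗ₜ c := e.symm_apply_eq.2 (by simp [e])
    simp [hc]

variable {ι : Type*} {y : ι → A}

/-- A derivation `A → K` is the infinitesimal part of a homomorphism `A → K[ε]` lifting `A → K`. -/
lemma exists_derivation_of_bijective_fibreMap
    (hy : Function.Bijective (fibreMap P (aeval y : MvPolynomial ι R →ₐ[R] A)))
    {K : Type*} [CommRing K] [Algebra R K] [Algebra A K] [IsScalarTower R A K]
    (ρ : P.ResidueField →ₐ[R] K) (k : ι → K) : ∃ d : Derivation R A K, ∀ i, d (y i) = k i := by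
  open TrivSqZeroExt in
  obtain ⟨ψ, hψ⟩ := (bijective_comp_of_bijective_fibreMap hy ((inlAlgHom R K K).comp ρ)).surjective
    (aeval fun i => inl (algebraMap A K (y i)) + inr (k i))
  have hψy (i : ι) : ψ (y i) = inl (algebraMap A K (y i)) + inr (k i) := by
    simpa using DFunLike.congr_fun hψ (X i)
  have hfst : (fstHom R K K).comp ψ = IsScalarTower.toAlgHom R A K :=
    (bijective_comp_of_bijective_fibreMap hy ρ).injective (by ext i; simp [hψy])
  have hfst' (a : A) : (ψ a).fst = algebraMap A K a := DFunLike.congr_fun hfst a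
  refine ⟨Derivation.mk' ((sndHom K K).restrictScalars R ∘ₗ ψ.toLinearMap) fun a b => ?_, ?_⟩
  · simp [hfst', Algebra.smul_def, mul_comm]
  · simp [hψy]

variable {κ : Type*} {x : ι → A} {w : κ → A}

lemma bijective_fibreMap_aeval_sumElim (hw : AlgebraicIndependent R w)
    (hx : IsFibreCoordinates (Algebra.adjoin R (Set.range w)) P x) :
    Function.Bijective (fibreMap P (aeval (Sum.elim x w) : MvPolynomial (ι ⊕ κ) R →ₐ[R] A)) := by
  let e := (sumAlgEquiv R ι κ).trans (mapAlgEquiv ι hw.aevalEquiv)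
  have he : (aeval (Sum.elim x w) : MvPolynomial (ι ⊕ κ) R →ₐ[R] A) =
      (aevalOver R (Algebra.adjoin R (Set.range w)) x).comp e.toAlgHom := by
    ext (i | j)
    · simp [e]
    · simp [e]
  have hcomp : fibreMap P (aeval (Sum.elim x w) : MvPolynomial (ι ⊕ κ) R →ₐ[R] A) =
      (fibreMap P (aevalOver R (Algebra.adjoin R (Set.range w)) x)).comp
        (Algebra.TensorProduct.congr .refl e).toAlgHom := by
    ext; simp [he]
  rw [hcomp]
  exact hx.bijective_map.comp (AlgEquiv.bijective _)

end Derivation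

section LinearAlgebra

lemma card_le_card_of_forall_exists_linearMap {A K M ι τ : Type*} [CommRing A] [Field K]
    [Algebra A K] [AddCommGroup M] [Module A M] [Fintype ι] [Fintype τ] (b : Module.Basis τ A M)
    {v : ι → M} (h : ∀ k : ι → K, ∃ g : M →ₗ[A] K, ∀ i, g (v i) = k i) :
    Fintype.card ι ≤ Fintype.card τ := by
  have hsurj : Function.Surjective (LinearMap.funLeft K K v ∘ₗ
      LinearMap.ltoFun A M K K ∘ₗ (b.constr K).toLinearMap) := fun k => by
    obtain ⟨g, hg⟩ := h k
    exact ⟨(b.constr K).symm g, by ext i; simp [hg, LinearMap.funLeft]⟩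
  simpa using LinearMap.finrank_le_finrank_of_surjective hsurj

variable {A M : Type*} [CommRing A] [AddCommGroup M] [Module A M]

lemma eq_top_of_forall_isMaximal_sup_smul_top [Module.Finite A M] {N : Submodule A M}
    (h : ∀ q : Ideal A, q.IsMaximal → N ⊔ q • ⊤ = ⊤) : N = ⊤ := by
  by_contra hne
  obtain ⟨q, hq, hle⟩ := Ideal.exists_le_maximal (N.colon Set.univ) fun hcolon =>
    hne (top_unique ((Submodule.colon_eq_top_iff_subset _).1 hcolon))
  obtain ⟨r, hr, hrN⟩ := Submodule.exists_sub_one_mem_and_smul_le_of_fg_of_le_sup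
    (I := q) (N := N) Module.Finite.fg_top le_rfl (h q hq).ge
  have hrq : r ∈ q := hle (Submodule.mem_colon.2 fun a _ =>
    hrN (Submodule.smul_mem_pointwise_smul a r ⊤ trivial))
  exact hq.ne_top ((Ideal.eq_top_iff_one q).2 (by simpa using sub_mem hrq hr))

lemma surjective_of_forall_isMaximal {ι : Type*} [Finite ι] {f : M →ₗ[A] ι → A}
    (h : ∀ q : Ideal A, q.IsMaximal → ∀ k : ι → A, ∃ a : M, ∀ i, f a i - k i ∈ q) :
    Function.Surjective f := by
  classical
  cases nonempty_fintype ι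
  refine LinearMap.range_eq_top.1 (eq_top_of_forall_isMaximal_sup_smul_top fun q hq =>
    top_unique fun k _ => ?_)
  obtain ⟨a, ha⟩ := h q hq k
  have hsub : f a - k ∈ q • (⊤ : Submodule A (ι → A)) := by
    rw [pi_eq_sum_univ' (f a - k)]
    exact sum_mem fun i _ => Submodule.smul_mem_smul (ha i) trivial
  rw [← sub_sub_cancel (f a) k]
  exact sub_mem (Submodule.mem_sup_left ⟨a, rfl⟩) (Submodule.mem_sup_right hsub)

lemma exists_dual_of_forall_isMaximal [Module.Projective A M] {ι : Type*} [Finite ι]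
    {v : ι → M}
    (h : ∀ q : Ideal A, q.IsMaximal → ∀ k : ι → A ⧸ q, ∃ g : M →ₗ[A] A ⧸ q, ∀ i, g (v i) = k i)
    (k : ι → A) : ∃ g : Module.Dual A M, ∀ i, g (v i) = k i := by
  let eval : Module.Dual A M →ₗ[A] ι → A := LinearMap.pi fun i => Module.Dual.eval A M (v i)
  obtain ⟨g, hg⟩ := surjective_of_forall_isMaximal (f := eval) (fun q hq k => by
    obtain ⟨g, hg⟩ := h q hq fun i => Ideal.Quotient.mk q (k i)
    obtain ⟨g', rfl⟩ := Module.projective_lifting_property q.mkQ g q.mkQ_surjective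
    exact ⟨g', fun i => Ideal.Quotient.eq.1 (hg i)⟩) k
  exact ⟨g, congrFun hg⟩

end LinearAlgebra

section StablyFree

open KaehlerDifferential

variable {R A : Type*} [CommRing R] [CommRing A] [Algebra R A]

lemma ker_kaehler_map_adjoin_le {M : Type*} [AddCommGroup M] [Module A M]
    {f : Ω[A⁄R] →ₗ[A] M} {S : Set A} (hf : ∀ a ∈ S, f (D R A a) = 0) :
    LinearMap.ker (KaehlerDifferential.map R (Algebra.adjoin R S) A A) ≤ LinearMap.ker f := by
  let _ : Module R M := Module.compHom M (algebraMap R A)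
  have : IsScalarTower R A M := .of_algebraMap_smul fun _ _ => rfl
  have hfB : Set.EqOn (f.compDer (D R A)) (0 : Derivation R A M) (Algebra.adjoin R S) :=
    Derivation.eqOn_adjoin hf
  rw [← range_mapBaseChange]
  rintro _ ⟨z, rfl⟩
  induction z using TensorProduct.induction_on with
  | zero => simp
  | add z z' hz hz' => simpa using add_mem hz hz'
  | tmul a η =>
    rw [mapBaseChange_tmul]
    refine Submodule.smul_mem _ a ?_
    have hη : η ∈ Submodule.span (Algebra.adjoin R S) (Set.range (D R (Algebra.adjoin R S))) :=
      span_range_derivation R (Algebra.adjoin R S) ▸ trivial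
    induction hη using Submodule.span_induction with
    | zero => simp
    | mem _ h =>
      obtain ⟨b, rfl⟩ := h
      simpa using hfB b.2
    | add η η' _ _ h h' => simpa using add_mem h h'
    | smul b η _ h =>
      rw [map_smul, ← algebraMap_smul A b]
      exact Submodule.smul_mem _ _ h

/-- The differential splits as `ω = (ω - ∑ j, g j ω • D (w j)) + ∑ j, g j ω • D (w j)`, and the
first summand depends only on the image of `ω` in the differentials over `R[w]`. -/
lemma exists_surjective_prod_kaehler {κ : Type*} [Finite κ] [DecidableEq κ] {w : κ → A}
    {g : κ → Module.Dual A Ω[A⁄R]} (hg : ∀ i j, g i (D R A (w j)) = (Pi.single i 1 : κ → A) j) :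
    ∃ f : Ω[A⁄Algebra.adjoin R (Set.range w)] × (κ → A) →ₗ[A] Ω[A⁄R], Function.Surjective f := by
  cases nonempty_fintype κ
  let p := KaehlerDifferential.map R (Algebra.adjoin R (Set.range w)) A A
  let s : (κ → A) →ₗ[A] Ω[A⁄R] := Fintype.linearCombination A fun j => D R A (w j)
  let π : Ω[A⁄R] →ₗ[A] Ω[A⁄R] := .id - s ∘ₗ LinearMap.pi g
  have hπw : ∀ a ∈ Set.range w, π (D R A a) = 0 := by
    rintro _ ⟨j, rfl⟩
    simp [π, s, hg, Fintype.linearCombination_apply, Pi.single_apply]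
  let π' := (LinearMap.ker p).liftQ π (ker_kaehler_map_adjoin_le hπw) ∘ₗ
    (p.quotKerEquivOfSurjective (map_surjective R _ A)).symm.toLinearMap
  have hπ' (ω : Ω[A⁄R]) : π' (p ω) = π ω := by simp [π']
  refine ⟨π'.coprod s, fun ω => ⟨(p ω, fun j => g j ω), ?_⟩⟩
  rw [LinearMap.coprod_apply, hπ']
  exact sub_add_cancel ω _

lemma exists_kaehler_dual {P : Ideal R} [P.IsPrime] {τ : Type*} {y : τ → A}
    (hy : Function.Bijective (fibreMap P (aeval y : MvPolynomial τ R →ₐ[R] A)))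
    {K : Type*} [CommRing K] [Algebra R K] [Algebra A K] [IsScalarTower R A K]
    (ρ : P.ResidueField →ₐ[R] K) (k : τ → K) :
    ∃ g : Ω[A⁄R] →ₗ[A] K, ∀ i, g (D R A (y i)) = k i := by
  obtain ⟨d, hd⟩ := exists_derivation_of_bijective_fibreMap hy ρ k
  exact ⟨d.liftKaehlerDifferential, by simpa using hd⟩

lemma exists_algHom_residueField_comap (q : Ideal A) [q.IsMaximal] :
    Nonempty ((q.comap (algebraMap R A)).ResidueField →ₐ[R] A ⧸ q) := by
  let _ := Ideal.Quotient.field q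
  refine ⟨Ideal.ResidueField.liftₐ _ (Algebra.ofId R (A ⧸ q)) (fun r hr => ?_) fun r hr => ?_⟩
  · exact Ideal.Quotient.eq_zero_iff_mem.2 hr
  · exact isUnit_iff_ne_zero.2 (mt Ideal.Quotient.eq_zero_iff_mem.1 hr)

end StablyFree

section Splitting

open KaehlerDifferential

variable {R A ι κ : Type*} [CommRing R] [CommRing A] [Algebra R A] {w : κ → A}

lemma exists_kaehler_dual_eq_single [Finite κ] [DecidableEq κ] [Module.Projective A Ω[A⁄R]]
    (hw : AlgebraicIndependent R w) (h : ∀ (P : Ideal R) [P.IsPrime], ∃ x : ι → A,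
      IsFibreCoordinates (Algebra.adjoin R (Set.range w)) P x) :
    ∃ g : κ → Module.Dual A Ω[A⁄R], ∀ i j, g i (D R A (w j)) = (Pi.single i 1 : κ → A) j := by
  have hq (q : Ideal A) (_ : q.IsMaximal) (k : κ → A ⧸ q) :
      ∃ g : Ω[A⁄R] →ₗ[A] A ⧸ q, ∀ j, g (D R A (w j)) = k j := by
    obtain ⟨x, hx⟩ := h (q.comap (algebraMap R A))
    obtain ⟨ρ⟩ := exists_algHom_residueField_comap (R := R) q
    obtain ⟨g, hg⟩ := exists_kaehler_dual (bijective_fibreMap_aeval_sumElim hw hx) ρ (Sum.elim 0 k)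
    exact ⟨g, fun j => hg (Sum.inr j)⟩
  choose g hg using fun i => exists_dual_of_forall_isMaximal hq (Pi.single i 1)
  exact ⟨g, hg⟩

lemma card_le_card_of_kaehler_basis [Nontrivial A] [Fintype ι] {σ τ : Type*} [Fintype σ]
    [Fintype τ] (b : Module.Basis τ A (Ω[A⁄R] × (σ → A)))
    (h : ∀ (P : Ideal R) [P.IsPrime], ∃ y : ι → A,
      Function.Bijective (fibreMap P (aeval y : MvPolynomial ι R →ₐ[R] A))) :
    Fintype.card (ι ⊕ σ) ≤ Fintype.card τ := by
  classical
  obtain ⟨q, hq⟩ := Ideal.exists_maximal A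
  let _ := Ideal.Quotient.field q
  obtain ⟨ρ⟩ := exists_algHom_residueField_comap (R := R) q
  obtain ⟨y, hy⟩ := h (q.comap (algebraMap R A))
  refine card_le_card_of_forall_exists_linearMap (K := A ⧸ q) b
    (v := Sum.elim (fun i => (D R A (y i), 0)) fun j => (0, Pi.single j 1)) fun k => ?_
  obtain ⟨g, hg⟩ := exists_kaehler_dual hy ρ fun i => k (Sum.inl i)
  refine ⟨g.coprod (Fintype.linearCombination A fun j => k (Sum.inr j)), ?_⟩
  rintro (i | j)
  · simp [hg]
  · simp [Fintype.linearCombination_apply_single]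

lemma exists_surjective_kaehler_prod [Finite ι] [Finite κ]
    (hΩ : IsStablyFree A Ω[A⁄R]) (hw : AlgebraicIndependent R w)
    (h : ∀ (P : Ideal R) [P.IsPrime], ∃ x : ι → A,
      IsFibreCoordinates (Algebra.adjoin R (Set.range w)) P x) :
    ∃ (s : ℕ) (f : Ω[A⁄Algebra.adjoin R (Set.range w)] × (κ ⊕ Fin s → A) →ₗ[A]
      (ι ⊕ κ ⊕ Fin s → A)), Function.Surjective f := by
  classical
  cases nonempty_fintype ι
  cases nonempty_fintype κ
  cases subsingleton_or_nontrivial A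
  · exact ⟨0, 0, Function.surjective_to_subsingleton _⟩
  obtain ⟨s, t, ⟨e⟩⟩ := hΩ
  have : Module.Projective A (Ω[A⁄R] × (Fin s → A)) := .of_equiv e.symm
  have : Module.Projective A Ω[A⁄R] := .of_split (.inl A _ (Fin s → A)) (.fst A _ _) rfl
  obtain ⟨g, hg⟩ := exists_kaehler_dual_eq_single hw h
  obtain ⟨p, hp⟩ := exists_surjective_prod_kaehler hg
  have hcard : Fintype.card ((ι ⊕ κ) ⊕ Fin s) ≤ Fintype.card (Fin t) :=
    card_le_card_of_kaehler_basis (.ofEquivFun e) fun P _ =>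
      (h P).imp' (Sum.elim · w) fun _ => bijective_fibreMap_aeval_sumElim hw
  obtain ⟨φ⟩ := Function.Embedding.nonempty_of_card_le hcard
  let φ' : ι ⊕ κ ⊕ Fin s → Fin t := φ ∘ (Equiv.sumAssoc ι κ (Fin s)).symm
  have hφ' : Function.Injective φ' := φ.injective.comp (Equiv.injective _)
  let a := (LinearEquiv.refl A Ω[A⁄Algebra.adjoin R (Set.range w)]).prodCongr
    (LinearEquiv.sumArrowLequivProdArrow κ (Fin s) A A)
  refine ⟨s, LinearMap.funLeft A A φ' ∘ₗ e.toLinearMap ∘ₗ p.prodMap .id ∘ₗ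
    (a.trans (LinearEquiv.prodAssoc A _ _ _).symm).toLinearMap, ?_⟩
  exact (LinearMap.funLeft_surjective_of_injective A A φ' hφ').comp
    (e.surjective.comp ((hp.prodMap Function.surjective_id).comp (LinearEquiv.surjective _)))

end Splitting

section Conclusion

open KaehlerDifferential

variable {R A ι κ : Type*} [CommRing R] [IsNoetherianRing R] [CommRing A] [Algebra R A]
  [Algebra.FiniteType R A] [Module.Flat R A] [Finite ι] [Finite κ] {w : κ → A}

theorem exists_nonempty_algEquiv_of_isFibreCoordinates
    (hΩ : IsStablyFree A Ω[A⁄R]) (hw : AlgebraicIndependent R w)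
    (h : ∀ (P : Ideal R) [P.IsPrime], ∃ x : ι → A,
      IsFibreCoordinates (Algebra.adjoin R (Set.range w)) P x) :
    ∃ ℓ : ℕ, Nonempty (MvPolynomial (Fin ℓ) A ≃ₐ[Algebra.adjoin R (Set.range w)]
      MvPolynomial (ι ⊕ Fin ℓ) (Algebra.adjoin R (Set.range w))) := by
  let B := Algebra.adjoin R (Set.range w)
  have : Module.Flat R B := .of_linearEquiv hw.aevalEquiv.symm.toLinearEquiv
  have : IsNoetherianRing B := isNoetherianRing_of_ringEquiv _ hw.aevalEquiv.toRingEquiv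
  obtain ⟨s, f, hf⟩ := exists_surjective_kaehler_prod hΩ hw h
  have : Module.Flat R (MvPolynomial (κ ⊕ Fin s) A) := .trans R A _
  obtain ⟨g, hg⟩ := exists_surjective_kaehler_mvPolynomial_of_prod hf
  obtain ⟨σ, _, ⟨e⟩⟩ := ((isGenericallyPolynomial_of_isFibreCoordinates h).mvPolynomial
    (κ ⊕ Fin s)).exists_nonempty_algEquiv hg
  obtain ⟨ℓ, ⟨ε⟩⟩ := Finite.exists_equiv_fin (σ ⊕ κ ⊕ Fin s)
  let eA : MvPolynomial σ (MvPolynomial (κ ⊕ Fin s) A) ≃ₐ[B] MvPolynomial (Fin ℓ) A :=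
    ((sumAlgEquiv A σ (κ ⊕ Fin s)).symm.trans (renameEquiv A ε)).restrictScalars B
  let ε' : (ι ⊕ κ ⊕ Fin s) ⊕ σ ≃ ι ⊕ Fin ℓ :=
    (Equiv.sumAssoc _ _ _).trans (.sumCongr (.refl ι) ((Equiv.sumComm _ _).trans ε))
  exact ⟨ℓ, ⟨eA.symm.trans (e.trans (renameEquiv B ε'))⟩⟩

end Conclusion

end AffineFibration

/-- (Main theorem.)  Let `R` be a Noetherian ring and `A` an `𝔸ⁿ`-fibration over `R`
such that `Ω_R(A)` is a stably free `A`-module.  If `W` is an `m`-tuple residual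
variable of `A` over `R`, then `A^[ℓ] = R[W]^[n-m+ℓ]` for some `ℓ`; in particular `A`
is a stably polynomial algebra over `R[W]`. -/
theorem stablyPolynomial_of_residualVariable_of_stablyFree_kaehler
    (R A : Type*) [CommRing R] [IsNoetherianRing R] [CommRing A] [Algebra R A]
    (n m : ℕ) (hA : IsAffineFibration R A n)
    (hΩ : IsStablyFree A (KaehlerDifferential R A))
    (W : Fin m → A) (hW : IsResidualVariable R A n m W) :
    ∃ ℓ : ℕ,
      Nonempty (MvPolynomial (Fin ℓ) A ≃ₐ[↥(Algebra.adjoin R (Set.range W))]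
        MvPolynomial (Fin (n - m + ℓ)) ↥(Algebra.adjoin R (Set.range W))) := by
  obtain ⟨_, _, -⟩ := hA
  obtain ⟨hWind, hWfib⟩ := hW
  obtain ⟨ℓ, ⟨e⟩⟩ := AffineFibration.exists_nonempty_algEquiv_of_isFibreCoordinates hΩ hWind
    fun P _ => AffineFibration.exists_isFibreCoordinates_of_fibersPolynomialOver hWfib P
  exact ⟨ℓ, ⟨e.trans (MvPolynomial.renameEquiv _ finSumFinEquiv)⟩⟩
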